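/- arXiv:1407.7804 — 2 statements merged into one kernel-verified Lean document; each statement's English description precedes it below -/
import Mathlib

section
/- For every ε > 0 there exist constants C', W₀ > 0 depending only on ε, C, c, γ such that for all W ≥ W₀, ‖(K − K̃)·g_α‖_{L²(ℝ)} ≤ C'·W^{−3/2+ε}·|μ|. -/
open MeasureTheory Complex Real
open scoped ComplexInnerProductSpace

noncomputable section

/-- The Hilbert space `L²(ℝ, ℂ)`. -/
abbrev Hsp : Type := Lp ℂ 2 (volume : Measure ℝ)

/-- The kernel `K(x,y) = exp(−W²ζ²(x−y)² − U(x)/2 − U(y)/2)`. -/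
def kerK (W : ℝ) (ζ : ℂ) (U : ℝ → ℂ) (x y : ℝ) : ℂ :=
  Complex.exp (-(W : ℂ)^2 * ζ^2 * ((x : ℂ) - (y : ℂ))^2 - U x / 2 - U y / 2)

/-- The harmonic-approximation kernel `K̃(x,y) = exp(−W²ζ²(x−y)² − (U''(0)/4)(x²+y²))`. -/
def kerKt (W : ℝ) (ζ : ℂ) (U : ℝ → ℂ) (x y : ℝ) : ℂ :=
  Complex.exp (-(W : ℂ)^2 * ζ^2 * ((x : ℂ) - (y : ℂ))^2
    - (deriv (deriv U) 0 / 4) * ((x : ℂ)^2 + (y : ℂ)^2))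

/-- `α = W·√(ζ²U''(0)/2)`, a positive real by assumption (U2). -/
def alph (W : ℝ) (ζ : ℂ) (U : ℝ → ℂ) : ℝ :=
  W * Real.sqrt ((ζ^2 * deriv (deriv U) 0).re / 2)

/-- `μ = √(π/(W²ζ² + α))`, principal branch. -/
def muK (W : ℝ) (ζ : ℂ) (U : ℝ → ℂ) : ℂ :=
  ((π : ℂ) / ((W : ℂ)^2 * ζ^2 + (alph W ζ U : ℂ))) ^ (1/2 : ℂ)

/-- The Gaussian `g_α(x) = (2α/π)^{1/4}·exp(−αx²)` (for real `α > 0`, a unit vector). -/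
def gaussF (α : ℝ) (x : ℝ) : ℂ :=
  (((2*α/π) ^ (1/4 : ℝ) : ℝ) : ℂ) * Complex.exp (-(α : ℂ) * (x : ℂ)^2)

/-- `T` is the integral operator on `L²(ℝ)` with kernel `k`. -/
def IsKerOp (k : ℝ → ℝ → ℂ) (T : Hsp →L[ℂ] Hsp) : Prop :=
  ∀ f : Hsp, ∀ᵐ x : ℝ, (T f : ℝ → ℂ) x = ∫ y : ℝ, k x y * (f : ℝ → ℂ) y

/-- The orthogonal projection of `L²(ℝ)` onto the orthogonal complement of the
unit vector `g`: `P u = u − ⟪g, u⟫·g`. -/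
def projP (g : Hsp) : Hsp →L[ℂ] Hsp :=
  ContinuousLinearMap.id ℂ Hsp - (innerSL ℂ g).smulRight g

/-- Assumptions (U1)–(U4) on the potential `U`, together with the conditions on `ζ`. -/
structure UHyp (C c γ : ℝ) (ζ : ℂ) (U : ℝ → ℂ) : Prop where
  hζ : ‖ζ‖ = 1
  hζre : 0 < (ζ^2).re
  hU1smooth : ContDiff ℝ (⊤ : ℕ∞) U
  hU1zero : U 0 = 0
  hU1deriv : deriv U 0 = 0
  hU2im : (ζ^2 * deriv (deriv U) 0).im = 0
  hU2pos : 0 < (ζ^2 * deriv (deriv U) 0).re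
  hU3 : ∀ x : ℝ, (1/C) * min 1 (x^2) ≤ (U x).re
  hU4 : ∃ UC : ℂ → ℂ, (∀ x : ℝ, UC x = U x) ∧
      AnalyticOnNhd ℂ UC {z : ℂ | |z.im| ≤ c} ∧
      ∀ z : ℂ, |z.im| ≤ c → ‖deriv UC z‖ ≤ C * (max 1 (UC z).re) ^ γ

end

section Potential

open Metric

lemma norm_exp_sub_exp_le {z w : ℂ} (hz : z.re ≤ 0) (hw : w.re ≤ 0) :
    ‖Complex.exp z - Complex.exp w‖ ≤ ‖z - w‖ := by
  have h := Convex.norm_image_sub_le_of_norm_hasDerivWithin_le (𝕜 := ℂ) (f := Complex.exp)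
    (f' := Complex.exp) (s := {u : ℂ | u.re ≤ 0}) (C := 1) (x := w) (y := z)
    (fun u _ => (Complex.hasDerivAt_exp u).hasDerivWithinAt)
    (fun u hu => by
      rw [Complex.norm_exp]
      exact Real.exp_le_one_iff.2 hu)
    (convex_halfSpace_re_le 0) hw hz
  simpa using h

/-- A function vanishing at the origin whose derivative is `O(|x|ⁿ)` is `O(|x|ⁿ⁺¹)`. -/
lemma norm_le_pow_succ_of_deriv {f f' : ℝ → ℂ} {M r : ℝ} {n : ℕ} (hM : 0 ≤ M) (h0 : f 0 = 0)
    (hf : ∀ x, |x| ≤ r → HasDerivAt f (f' x) x)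
    (hf' : ∀ x, |x| ≤ r → ‖f' x‖ ≤ M * |x| ^ n) {x : ℝ} (hx : |x| ≤ r) :
    ‖f x‖ ≤ M * |x| ^ (n + 1) := by
  have hsub : ∀ u ∈ closedBall (0 : ℝ) |x|, |u| ≤ |x| := fun u hu => by simpa using hu
  have h := Convex.norm_image_sub_le_of_norm_hasDerivWithin_le (𝕜 := ℝ) (f := f) (f' := f')
    (s := closedBall 0 |x|) (C := M * |x| ^ n) (x := 0) (y := x)
    (fun u hu => (hf u ((hsub u hu).trans hx)).hasDerivWithinAt)
    (fun u hu => (hf' u ((hsub u hu).trans hx)).trans 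
      (mul_le_mul_of_nonneg_left (pow_le_pow_left₀ (abs_nonneg u) (hsub u hu) n) hM))
    (convex_closedBall _ _) (by simp) (by simp)
  rw [h0, sub_zero, sub_zero, Real.norm_eq_abs] at h
  rw [pow_succ, ← mul_assoc]
  exact h

/-- A function vanishing at the origin that obeys `‖f'‖ ≤ C·max(1, Re f)^γ` stays in the unit
disc on a disc of radius `1/(2C)`. -/
lemma norm_le_one_of_deriv_growth {f : ℂ → ℂ} {C γ r : ℝ} (hC : 1 ≤ C) (hr : 0 < r)
    (hrC : 2 * C * r ≤ 1) (h0 : f 0 = 0) (hf : ∀ z : ℂ, ‖z‖ ≤ r → DifferentiableAt ℂ f z)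
    (hf' : ∀ z : ℂ, ‖z‖ ≤ r → ‖deriv f z‖ ≤ C * (max 1 (f z).re) ^ γ) {z : ℂ} (hz : ‖z‖ ≤ r) :
    ‖f z‖ ≤ 1 := by
  have hball : ∀ t ∈ Set.Icc (0 : ℝ) 1, ‖(t : ℂ) * z‖ ≤ r := by
    intro t ht
    rw [norm_mul, Complex.norm_real, Real.norm_of_nonneg ht.1]
    exact (mul_le_of_le_one_left (norm_nonneg z) ht.2).trans hz
  have hd : ∀ t ∈ Set.Icc (0 : ℝ) 1,
      HasDerivAt (fun t : ℝ => f (t * z)) (deriv f (t * z) * z) t := by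
    intro t ht
    have h1 : HasDerivAt (fun w : ℂ => w * z) z (t : ℂ) := by
      simpa using (hasDerivAt_id (t : ℂ)).mul_const z
    exact HasDerivAt.comp_ofReal (HasDerivAt.comp (t : ℂ) (hf _ (hball t ht)).hasDerivAt h1)
  have h := image_norm_le_of_norm_deriv_right_lt_deriv_boundary
    (f := fun t : ℝ => f (t * z)) (a := 0) (b := 1) (f' := fun t => deriv f (t * z) * z)
    (fun t ht => (hd t ht).continuousAt.continuousWithinAt)
    (fun t ht => (hd t (Set.Ico_subset_Icc_self ht)).hasDerivWithinAt)
    (B := fun t => 2 * C * r * t) (B' := fun _ => 2 * C * r) (by simp [h0])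
    (fun x => by simpa using (hasDerivAt_id x).const_mul (2 * C * r))
    (by
      intro t ht heq
      have htI := Set.Ico_subset_Icc_self ht
      have hle : ‖f (t * z)‖ ≤ 1 := by
        rw [heq]
        nlinarith [ht.1, ht.2, mul_pos (show (0 : ℝ) < C by linarith) hr]
      have hmax : max 1 (f (t * z)).re = 1 :=
        max_eq_left ((Complex.re_le_norm _).trans hle)
      have h2 := hf' _ (hball t htI)
      rw [hmax, Real.one_rpow, mul_one] at h2
      rw [norm_mul]
      have : ‖deriv f (t * z)‖ * ‖z‖ ≤ C * r := by gcongr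
      nlinarith [mul_pos (show (0 : ℝ) < C by linarith) hr])
    (x := 1) (by simp)
  simp only [Complex.ofReal_one, one_mul, mul_one] at h
  linarith

/-- Cauchy's estimate: a bound on a disc gives a bound for the derivative on the half disc. -/
lemma norm_deriv_le_of_norm_le_closedBall {f : ℂ → ℂ} {B r : ℝ} (hr : 0 < r)
    (hf : ∀ z : ℂ, ‖z‖ ≤ r → DifferentiableAt ℂ f z) (hB : ∀ z : ℂ, ‖z‖ ≤ r → ‖f z‖ ≤ B)
    {z : ℂ} (hz : ‖z‖ ≤ r / 2) : ‖deriv f z‖ ≤ B / (r / 2) := by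
  have hsub : ∀ w ∈ closedBall z (r / 2), ‖w‖ ≤ r := by
    intro w hw
    have h1 : ‖w - z‖ ≤ r / 2 := by simpa [dist_eq_norm] using hw
    have h2 := norm_add_le (w - z) z
    rw [sub_add_cancel] at h2
    linarith
  refine Complex.norm_deriv_le_of_forall_mem_sphere_norm_le (half_pos hr) ?_
    (fun w hw => hB w (hsub w (sphere_subset_closedBall hw)))
  refine DifferentiableOn.diffContOnCl fun w hw => ?_
  exact (hf w (hsub w (closure_ball_subset_closedBall hw))).differentiableWithinAt

/-- The quadratic Taylor bound for `U` and the bound for `U''(0)`, with constants depending only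
on `C` and `c`. -/
lemma UHyp.exists_taylor_bound {C c : ℝ} (hC : 1 ≤ C) (hc : 0 < c) :
    ∃ r A M : ℝ, 0 < r ∧ 0 < A ∧ 0 < M ∧ ∀ (γ : ℝ) (ζ : ℂ) (U : ℝ → ℂ), UHyp C c γ ζ U →
      ‖deriv (deriv U) 0‖ ≤ A ∧
      ∀ x : ℝ, |x| ≤ r → ‖U x - deriv (deriv U) 0 / 2 * (x : ℂ) ^ 2‖ ≤ M * |x| ^ 3 := by
  set r : ℝ := min c (1 / (2 * C)) with hrdef
  have hCpos : 0 < C := by linarith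
  have hr : 0 < r := by positivity
  have hrC : 2 * C * r ≤ 1 := by
    have h : r ≤ 1 / (2 * C) := min_le_right _ _
    rw [le_div_iff₀ (by positivity)] at h
    linarith
  refine ⟨r / 2 / 2 / 2, 1 / (r / 2) / (r / 2 / 2), 1 / (r / 2) / (r / 2 / 2) / (r / 2 / 2 / 2),
    by positivity, by positivity, by positivity, ?_⟩
  intro γ ζ U hU
  obtain ⟨F, hFU, hFa, hFd⟩ := hU.hU4
  have hF0 : F 0 = 0 := by simpa [hU.hU1zero] using hFU 0
  have hstrip : ∀ z : ℂ, ‖z‖ ≤ r → |z.im| ≤ c := fun z hz =>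
    (Complex.abs_im_le_norm z).trans (hz.trans (min_le_left _ _))
  have hFa1 := hFa.deriv
  have hFa2 := hFa1.deriv
  have hB0 : ∀ z : ℂ, ‖z‖ ≤ r → ‖F z‖ ≤ 1 := fun z hz =>
    norm_le_one_of_deriv_growth hC hr hrC hF0
      (fun w hw => (hFa w (hstrip w hw)).differentiableAt)
      (fun w hw => hFd w (hstrip w hw)) hz
  have hB1 : ∀ z : ℂ, ‖z‖ ≤ r / 2 → ‖deriv F z‖ ≤ 1 / (r / 2) := fun z hz =>
    norm_deriv_le_of_norm_le_closedBall hr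
      (fun w hw => (hFa w (hstrip w hw)).differentiableAt) hB0 hz
  have hB2 : ∀ z : ℂ, ‖z‖ ≤ r / 2 / 2 → ‖deriv (deriv F) z‖ ≤ 1 / (r / 2) / (r / 2 / 2) :=
    fun z hz => norm_deriv_le_of_norm_le_closedBall (half_pos hr)
      (fun w hw => (hFa1 w (hstrip w (by linarith))).differentiableAt) hB1 hz
  have hB3 : ∀ z : ℂ, ‖z‖ ≤ r / 2 / 2 / 2 → ‖deriv (deriv (deriv F)) z‖ ≤
      1 / (r / 2) / (r / 2 / 2) / (r / 2 / 2 / 2) :=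
    fun z hz => norm_deriv_le_of_norm_le_closedBall (half_pos (half_pos hr))
      (fun w hw => (hFa2 w (hstrip w (by linarith))).differentiableAt) hB2 hz
  have hreal : ∀ x : ℝ, |(x : ℂ).im| ≤ c := fun x => by simpa using hc.le
  have hUF : U = fun x : ℝ => F x := funext fun x => (hFU x).symm
  have hd1 : ∀ x : ℝ, HasDerivAt (fun x : ℝ => F x) (deriv F x) x := fun x =>
    (hFa x (hreal x)).differentiableAt.hasDerivAt.comp_ofReal
  have hd2 : ∀ x : ℝ, HasDerivAt (fun x : ℝ => deriv F x) (deriv (deriv F) x) x := fun x =>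
    (hFa1 x (hreal x)).differentiableAt.hasDerivAt.comp_ofReal
  have hd3 : ∀ x : ℝ, HasDerivAt (fun x : ℝ => deriv (deriv F) x)
      (deriv (deriv (deriv F)) x) x := fun x =>
    (hFa2 x (hreal x)).differentiableAt.hasDerivAt.comp_ofReal
  have hU' : deriv U = fun x : ℝ => deriv F x := by
    rw [hUF]
    exact funext fun x => (hd1 x).deriv
  have hU'' : deriv (deriv U) = fun x : ℝ => deriv (deriv F) x := by
    rw [hU']
    exact funext fun x => (hd2 x).deriv
  have hF1 : deriv F 0 = 0 := by
    have := hU.hU1deriv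
    rw [hU'] at this
    simpa using this
  refine ⟨?_, fun x hx => ?_⟩
  · rw [hU'']
    exact hB2 _ (by simp; positivity)
  set M := 1 / (r / 2) / (r / 2 / 2) / (r / 2 / 2 / 2)
  have hM : 0 ≤ M := by positivity
  set p := deriv (deriv U) 0 with hp
  have hp' : deriv (deriv F) 0 = p := by rw [hp, hU'']; simp
  have b2 : ∀ x : ℝ, |x| ≤ r / 2 / 2 / 2 → ‖deriv (deriv F) x - p‖ ≤ M * |x| ^ (0 + 1) :=
    fun x hx => norm_le_pow_succ_of_deriv (f := fun x : ℝ => deriv (deriv F) x - p) hM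
      (by simp [hp']) (fun x _ => (hd3 x).sub_const p)
      (fun x hx => by simpa using hB3 x (by simpa using hx)) hx
  have b1 : ∀ x : ℝ, |x| ≤ r / 2 / 2 / 2 → ‖deriv F x - p * x‖ ≤ M * |x| ^ (0 + 1 + 1) :=
    fun x hx => norm_le_pow_succ_of_deriv (f := fun x : ℝ => deriv F x - p * x) hM
      (by simp [hF1])
      (fun x _ => (hd2 x).sub (by simpa using (Complex.ofRealCLM.hasDerivAt (x := x)).const_mul p))
      b2 hx
  have b0 := norm_le_pow_succ_of_deriv (f := fun x : ℝ => F x - p / 2 * (x : ℂ) ^ 2) hM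
      (by simp [hF0])
      (fun x _ => (hd1 x).sub (f' := deriv F x) (g' := p * x) (by
        have h := ((Complex.ofRealCLM.hasDerivAt (x := x)).pow 2).const_mul (p / 2)
        have e : p / 2 * ((2 : ℕ) * Complex.ofRealCLM x ^ (2 - 1) * Complex.ofRealCLM 1)
            = p * x := by
          simp; ring
        rw [e] at h
        exact h))
      b1 hx
  rw [hUF]
  exact b0

/-- Uniform bounds for the potential: `Re ζ²` and `ζ²U''(0)` are bounded away from zero, and
`exp(-U/2)` is cubically close to its Gaussian approximation. -/
lemma UHyp.exists_uniform_bounds {C c : ℝ} (hC : 1 ≤ C) (hc : 0 < c) :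
    ∃ s a A M : ℝ, 0 < s ∧ 0 < a ∧ 0 < A ∧ 0 < M ∧
      ∀ (γ : ℝ) (ζ : ℂ) (U : ℝ → ℂ), UHyp C c γ ζ U →
        s ≤ (ζ ^ 2).re ∧ a ≤ (ζ ^ 2 * deriv (deriv U) 0).re ∧
        (ζ ^ 2 * deriv (deriv U) 0).re ≤ A ∧ 0 ≤ (deriv (deriv U) 0).re ∧
        ∀ x : ℝ, ‖Complex.exp (-U x / 2) - Complex.exp (-(deriv (deriv U) 0 / 4) * (x : ℂ) ^ 2)‖
          ≤ M * |x| ^ 3 := by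
  obtain ⟨r, A, M, hr, hA, hM, h⟩ := UHyp.exists_taylor_bound hC hc
  have hCpos : 0 < C := by linarith
  refine ⟨1 / (C * A), 1 / C, A, M + 2 / r ^ 3, by positivity, by positivity, hA,
    by positivity, ?_⟩
  intro γ ζ U hU
  obtain ⟨hpA, hT⟩ := h γ ζ U hU
  set p := deriv (deriv U) 0 with hp
  have hζ2 : ‖ζ ^ 2‖ = 1 := by rw [norm_pow, hU.hζ, one_pow]
  have hζn : (ζ ^ 2).re ^ 2 + (ζ ^ 2).im ^ 2 = 1 := by
    have := Complex.sq_norm (ζ ^ 2)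
    rw [hζ2, Complex.normSq_apply] at this
    nlinarith
  have him := hU.hU2im
  have hre := hU.hU2pos
  rw [← hp] at him hre
  have hpre : p.re = (ζ ^ 2).re * (ζ ^ 2 * p).re := by
    rw [Complex.mul_im] at him
    rw [Complex.mul_re]
    linear_combination (-p.re) * hζn + (ζ ^ 2).im * him
  have htA : (ζ ^ 2 * p).re ≤ A := by
    refine (Complex.re_le_norm _).trans ?_
    rw [norm_mul, hζ2, one_mul]
    exact hpA
  have hpC : 1 / C ≤ p.re := by
    set x := min (min r 1) (1 / (2 * C * M)) with hx
    have hxpos : 0 < x := by positivity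
    have hxr : x ≤ r := (min_le_left _ _).trans (min_le_left _ _)
    have hx1 : x ≤ 1 := (min_le_left _ _).trans (min_le_right _ _)
    have hxM : x * (C * M) ≤ 1 / 2 := by
      have h : x ≤ 1 / (2 * C * M) := min_le_right _ _
      rw [le_div_iff₀ (by positivity)] at h
      linarith
    have h1 := hT x (by rwa [abs_of_pos hxpos])
    rw [abs_of_pos hxpos] at h1
    have h2 := (Complex.re_le_norm _).trans h1
    have h3 : (p / 2 * (x : ℂ) ^ 2).re = p.re / 2 * x ^ 2 := by
      rw [← Complex.ofReal_pow, Complex.re_mul_ofReal]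
      simp
    rw [Complex.sub_re, h3] at h2
    have h4 := hU.hU3 x
    rw [min_eq_right (by nlinarith)] at h4
    have h5 : x ^ 2 * (1 / C) ≤ x ^ 2 * (p.re / 2 + M * x) := by nlinarith
    have h6 := le_of_mul_le_mul_left h5 (by positivity)
    have h7 : M * x ≤ 1 / C / 2 := by
      rw [div_div, le_div_iff₀ (by positivity)]
      nlinarith
    linarith
  have hp0 : 0 < p.re := lt_of_lt_of_le (by positivity) hpC
  have hs1 : (ζ ^ 2).re ≤ 1 := (Complex.re_le_norm _).trans hζ2.le
  refine ⟨?_, ?_, htA, hp0.le, fun x => ?_⟩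
  · rw [← div_div, div_le_iff₀ hA]
    calc 1 / C ≤ (ζ ^ 2).re * (ζ ^ 2 * p).re := by rw [← hpre]; exact hpC
      _ ≤ (ζ ^ 2).re * A := by gcongr; exact hU.hζre.le
  · calc 1 / C ≤ (ζ ^ 2).re * (ζ ^ 2 * p).re := by rw [← hpre]; exact hpC
      _ ≤ 1 * (ζ ^ 2 * p).re := by gcongr
      _ = _ := one_mul _
  have hUre : (-U x / 2).re ≤ 0 := by
    have h1 := hU.hU3 x
    have h2 : 0 ≤ 1 / C * min 1 (x ^ 2) := by positivity
    have h3 : (-U x / 2).re = -(U x).re / 2 := by simp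
    rw [h3]
    linarith
  have hGre : (-(p / 4) * (x : ℂ) ^ 2).re ≤ 0 := by
    have h3 : (-(p / 4) * (x : ℂ) ^ 2).re = -(p.re / 4) * x ^ 2 := by
      rw [← Complex.ofReal_pow, Complex.re_mul_ofReal]
      simp
    rw [h3]
    nlinarith [sq_nonneg x]
  rcases le_total |x| r with hx | hx
  · refine (norm_exp_sub_exp_le hUre hGre).trans ?_
    have e : -U x / 2 - -(p / 4) * (x : ℂ) ^ 2 = -(1 / 2) * (U x - p / 2 * (x : ℂ) ^ 2) := by ring
    rw [e, norm_mul]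
    have h1 := hT x hx
    have h2 : ‖(-(1 / 2) : ℂ)‖ = 1 / 2 := by simp
    have h3 : 0 ≤ 2 / r ^ 3 * |x| ^ 3 := by positivity
    have h4 : 0 ≤ M * |x| ^ 3 := by positivity
    rw [h2]
    linarith
  · have h1 : ‖Complex.exp (-U x / 2)‖ ≤ 1 := by
      rw [Complex.norm_exp]
      exact Real.exp_le_one_iff.2 hUre
    have h2 : ‖Complex.exp (-(p / 4) * (x : ℂ) ^ 2)‖ ≤ 1 := by
      rw [Complex.norm_exp]
      exact Real.exp_le_one_iff.2 hGre
    have h3 : 2 ≤ 2 / r ^ 3 * |x| ^ 3 := by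
      rw [div_mul_eq_mul_div, le_div_iff₀ (by positivity)]
      gcongr
    have h4 : 0 ≤ M * |x| ^ 3 := by positivity
    refine (norm_sub_le _ _).trans ?_
    linarith

end Potential

section Gaussian

lemma pow_three_mul_exp_neg_sq_le {m : ℝ} (hm : 0 < m) (u : ℝ) :
    u ^ 3 * Real.exp (-m ^ 2 * u ^ 2) ≤ 8 / m ^ 3 * Real.exp (-(m ^ 2 / 2) * u ^ 2) := by
  have h1 := Real.quadratic_le_exp_of_nonneg (x := (m * u) ^ 2 / 2) (by positivity)
  have h2 : (m * u) ^ 3 ≤ 8 * Real.exp ((m * u) ^ 2 / 2) := by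
    nlinarith [sq_nonneg (m * u - (m * u) ^ 2), sq_nonneg (m * u), sq_nonneg ((m * u) ^ 2)]
  have h3 : Real.exp (-(m ^ 2 / 2) * u ^ 2)
      = Real.exp ((m * u) ^ 2 / 2) * Real.exp (-m ^ 2 * u ^ 2) := by
    rw [← Real.exp_add]
    congr 1
    ring
  rw [h3, div_mul_eq_mul_div, le_div_iff₀ (by positivity)]
  calc u ^ 3 * Real.exp (-m ^ 2 * u ^ 2) * m ^ 3
      = (m * u) ^ 3 * Real.exp (-m ^ 2 * u ^ 2) := by ring
    _ ≤ 8 * Real.exp ((m * u) ^ 2 / 2) * Real.exp (-m ^ 2 * u ^ 2) := by gcongr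
    _ = _ := by ring

/-- Cubic weights against a product of Gaussians: `k` is the width parameter of the kernel and
`b` that of the state, both on the scale of square roots. -/
lemma cubic_mul_gaussians_le {k b : ℝ} (hb : 0 < b) (hkb : 2 * b ^ 2 ≤ k ^ 2) (hk : 0 < k)
    (x y : ℝ) :
    (|x| ^ 3 + |y| ^ 3) * (Real.exp (-k ^ 2 * (x - y) ^ 2) * Real.exp (-b ^ 2 * y ^ 2)) ≤
      80 / b ^ 3 * Real.exp (-(b ^ 2 / 4) * x ^ 2) * Real.exp (-(k ^ 2 / 4) * (x - y) ^ 2) := by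
  have hbk : b ≤ k := by nlinarith
  have h1 := pow_three_mul_exp_neg_sq_le hk |x - y|
  have h2 := pow_three_mul_exp_neg_sq_le hb |y|
  simp only [sq_abs] at h1 h2
  have h3 : |x| ^ 3 ≤ 4 * (|x - y| ^ 3 + |y| ^ 3) := by
    have ht : |x| ≤ |x - y| + |y| := by simpa using abs_add_le (x - y) y
    have hs : |x| ^ 3 ≤ (|x - y| + |y|) ^ 3 := by gcongr
    nlinarith [mul_nonneg (add_nonneg (abs_nonneg (x - y)) (abs_nonneg y))
      (sq_nonneg (|x - y| - |y|))]
  have h4 : Real.exp (-k ^ 2 * (x - y) ^ 2) ≤ Real.exp (-(k ^ 2 / 2) * (x - y) ^ 2) := by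
    apply Real.exp_le_exp.2
    nlinarith [mul_nonneg (sq_nonneg k) (sq_nonneg (x - y))]
  have h5 : Real.exp (-b ^ 2 * y ^ 2) ≤ Real.exp (-(b ^ 2 / 2) * y ^ 2) := by
    apply Real.exp_le_exp.2
    nlinarith [mul_nonneg (sq_nonneg b) (sq_nonneg y)]
  have h6 : 8 / k ^ 3 ≤ 8 / b ^ 3 := by gcongr
  set E := Real.exp (-k ^ 2 * (x - y) ^ 2)
  set G := Real.exp (-b ^ 2 * y ^ 2)
  set E' := Real.exp (-(k ^ 2 / 2) * (x - y) ^ 2)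
  set G' := Real.exp (-(b ^ 2 / 2) * y ^ 2)
  have hE : 0 < E := Real.exp_pos _
  have hG : 0 < G := Real.exp_pos _
  have hE' : 0 < E' := Real.exp_pos _
  have hG' : 0 < G' := Real.exp_pos _
  have h7 : E' * G' ≤
      Real.exp (-(b ^ 2 / 4) * x ^ 2) * Real.exp (-(k ^ 2 / 4) * (x - y) ^ 2) := by
    rw [← Real.exp_add, ← Real.exp_add]
    apply Real.exp_le_exp.2
    nlinarith [mul_nonneg (sq_nonneg b) (sq_nonneg (x - 2 * y)),
      mul_nonneg (sub_nonneg.2 hkb) (sq_nonneg (x - y))]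
  calc (|x| ^ 3 + |y| ^ 3) * (E * G)
      ≤ (5 * (|x - y| ^ 3 + |y| ^ 3)) * (E * G) := by
        gcongr
        nlinarith [pow_nonneg (abs_nonneg (x - y)) 3]
    _ = 5 * ((|x - y| ^ 3 * E) * G + E * (|y| ^ 3 * G)) := by ring
    _ ≤ 5 * ((8 / b ^ 3 * E') * G' + E' * (8 / b ^ 3 * G')) := by
        have h8 : |x - y| ^ 3 * E ≤ 8 / b ^ 3 * E' := h1.trans (by gcongr)
        exact mul_le_mul_of_nonneg_left (add_le_add
          (mul_le_mul h8 h5 hG.le (by positivity))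
          (mul_le_mul h4 h2 (by positivity) hE'.le)) (by norm_num)
    _ = 80 / b ^ 3 * (E' * G') := by ring
    _ ≤ 80 / b ^ 3 *
        (Real.exp (-(b ^ 2 / 4) * x ^ 2) * Real.exp (-(k ^ 2 / 4) * (x - y) ^ 2)) := by gcongr
    _ = _ := by ring

/-- An `L²` function with a Gaussian pointwise bound has the corresponding `L²` bound. -/
lemma Hsp.norm_sq_le_of_gaussian_bound (f : Hsp) {B b : ℝ} (hb : 0 < b) (hB : 0 ≤ B)
    (hf : ∀ᵐ x : ℝ, ‖(f : ℝ → ℂ) x‖ ≤ B * Real.exp (-(b / 4) * x ^ 2)) :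
    ‖f‖ ^ 2 ≤ B ^ 2 * √(π / (b / 2)) := by
  have hint : Integrable (fun x : ℝ => B ^ 2 * Real.exp (-(b / 2) * x ^ 2)) :=
    (integrable_exp_neg_mul_sq (by positivity)).const_mul _
  have h : ‖∫ x : ℝ, inner ℂ ((f : ℝ → ℂ) x) ((f : ℝ → ℂ) x)‖ ≤
      ∫ x : ℝ, B ^ 2 * Real.exp (-(b / 2) * x ^ 2) := by
    refine norm_integral_le_of_norm_le hint ?_
    filter_upwards [hf] with x hx
    refine (norm_inner_le_norm _ _).trans ?_
    calc ‖(f : ℝ → ℂ) x‖ * ‖(f : ℝ → ℂ) x‖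
        ≤ (B * Real.exp (-(b / 4) * x ^ 2)) * (B * Real.exp (-(b / 4) * x ^ 2)) := by gcongr
      _ = B ^ 2 * (Real.exp (-(b / 4) * x ^ 2) * Real.exp (-(b / 4) * x ^ 2)) := by ring
      _ = _ := by
        rw [← Real.exp_add]
        congr 2
        ring
  rw [integral_const_mul, integral_gaussian] at h
  rw [← MeasureTheory.L2.inner_def, inner_self_eq_norm_sq_to_K] at h
  simpa using h

lemma norm_gaussF (α x : ℝ) (hα : 0 ≤ α) :
    ‖gaussF α x‖ = (2 * α / π) ^ (1 / 4 : ℝ) * Real.exp (-α * x ^ 2) := by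
  rw [gaussF, norm_mul, Complex.norm_real, Real.norm_of_nonneg (by positivity), Complex.norm_exp]
  congr 2
  rw [← Complex.ofReal_neg, ← Complex.ofReal_pow, ← Complex.ofReal_mul, Complex.ofReal_re]

/-- Two integral kernels `E(x,y)eᵢ(x)eᵢ(y)`, with `|E(x,y)| ≤ exp(-k²(x-y)²)` and cubically close
multipliers `e₁`, `e₂`, act almost equally on a Gaussian. -/
lemma norm_kernel_diff_gaussF_le {k b M : ℝ} (hb : 0 < b) (hk : 0 < k)
    (hkb : 2 * b ^ 2 ≤ k ^ 2) (hM : 0 ≤ M) {E : ℝ → ℝ → ℂ} {e₁ e₂ : ℝ → ℂ}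
    (hEc : ∀ x, Continuous (E x)) (hc₁ : Continuous e₁) (hc₂ : Continuous e₂)
    (hE : ∀ x y, ‖E x y‖ ≤ Real.exp (-k ^ 2 * (x - y) ^ 2))
    (h₁ : ∀ x, ‖e₁ x‖ ≤ 1) (h₂ : ∀ x, ‖e₂ x‖ ≤ 1)
    (h₁₂ : ∀ x, ‖e₁ x - e₂ x‖ ≤ M * |x| ^ 3) (T₁ T₂ : Hsp →L[ℂ] Hsp)
    (hT₁ : IsKerOp (fun x y => E x y * (e₁ x * e₁ y)) T₁)
    (hT₂ : IsKerOp (fun x y => E x y * (e₂ x * e₂ y)) T₂)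
    (g : Hsp) (hg : ∀ᵐ x : ℝ, (g : ℝ → ℂ) x = gaussF (b ^ 2) x) :
    ‖T₁ g - T₂ g‖ ≤ 320 * √π * M / (b ^ 3 * k) := by
  set N : ℝ := (2 * b ^ 2 / π) ^ (1 / 4 : ℝ) with hN
  have hN0 : 0 ≤ N := by positivity
  have hN4 : N ^ 4 = 2 * b ^ 2 / π := by
    rw [hN, ← Real.rpow_natCast, ← Real.rpow_mul (by positivity)]
    norm_num
  have hgc : Continuous (gaussF (b ^ 2)) := by
    unfold gaussF
    fun_prop
  have hgn : ∀ y, ‖gaussF (b ^ 2) y‖ = N * Real.exp (-b ^ 2 * y ^ 2) := fun y =>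
    norm_gaussF _ _ (by positivity)
  have hint : ∀ e : ℝ → ℂ, Continuous e → (∀ x, ‖e x‖ ≤ 1) → ∀ x : ℝ,
      Integrable (fun y => E x y * (e x * e y) * gaussF (b ^ 2) y) := by
    intro e hec he x
    refine ((integrable_exp_neg_mul_sq (b := b ^ 2) (by positivity)).const_mul N).mono'
      ((((hEc x).mul (continuous_const.mul hec)).mul hgc).aestronglyMeasurable) ?_
    refine Filter.Eventually.of_forall fun y => ?_
    rw [norm_mul, hgn, norm_mul, norm_mul]
    have h3 : ‖E x y‖ ≤ 1 := (hE x y).trans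
      (Real.exp_le_one_iff.2 (by nlinarith [mul_nonneg (sq_nonneg k) (sq_nonneg (x - y))]))
    have h4 : ‖e x‖ * ‖e y‖ ≤ 1 := mul_le_one₀ (he x) (norm_nonneg _) (he y)
    have h5 : ‖E x y‖ * (‖e x‖ * ‖e y‖) ≤ 1 := mul_le_one₀ h3 (by positivity) h4
    exact mul_le_of_le_one_left (by positivity) h5
  have hee : ∀ x y, ‖e₁ x * e₁ y - e₂ x * e₂ y‖ ≤ M * (|x| ^ 3 + |y| ^ 3) := by
    intro x y
    have e : e₁ x * e₁ y - e₂ x * e₂ y = (e₁ x - e₂ x) * e₁ y + e₂ x * (e₁ y - e₂ y) := by ring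
    rw [e]
    refine (norm_add_le _ _).trans ?_
    rw [norm_mul, norm_mul]
    have h3 : ‖e₁ x - e₂ x‖ * ‖e₁ y‖ ≤ M * |x| ^ 3 * 1 := by
      gcongr
      exacts [h₁₂ x, h₁ y]
    have h4 : ‖e₂ x‖ * ‖e₁ y - e₂ y‖ ≤ 1 * (M * |y| ^ 3) := by
      gcongr
      exacts [h₂ x, h₁₂ y]
    linarith
  set B : ℝ := M * N * (80 / b ^ 3) * √(π / (k ^ 2 / 4)) with hBdef
  have hpt : ∀ᵐ x : ℝ,
      ‖((T₁ g - T₂ g : Hsp) : ℝ → ℂ) x‖ ≤ B * Real.exp (-(b ^ 2 / 4) * x ^ 2) := by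
    filter_upwards [Lp.coeFn_sub (T₁ g) (T₂ g), hT₁ g, hT₂ g] with x hs h1 h2
    have hcongr : ∀ e : ℝ → ℂ, ∫ y, E x y * (e x * e y) * (g : ℝ → ℂ) y
        = ∫ y, E x y * (e x * e y) * gaussF (b ^ 2) y := fun e =>
      integral_congr_ae (by filter_upwards [hg] with y hy; rw [hy])
    rw [hs, Pi.sub_apply, h1, h2, hcongr e₁, hcongr e₂,
      ← integral_sub (hint e₁ hc₁ h₁ x) (hint e₂ hc₂ h₂ x)]
    have hI : Integrable (fun y : ℝ => Real.exp (-(k ^ 2 / 4) * (x - y) ^ 2)) :=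
      (integrable_exp_neg_mul_sq (b := k ^ 2 / 4) (by positivity)).comp_sub_left x
    have hval : ∫ y : ℝ, Real.exp (-(k ^ 2 / 4) * (x - y) ^ 2) = √(π / (k ^ 2 / 4)) := by
      rw [← integral_gaussian]
      exact integral_sub_left_eq_self (fun u : ℝ => Real.exp (-(k ^ 2 / 4) * u ^ 2)) volume x
    refine (norm_integral_le_of_norm_le
      (hI.const_mul (M * N * (80 / b ^ 3 * Real.exp (-(b ^ 2 / 4) * x ^ 2))))
      (Filter.Eventually.of_forall fun y => ?_)).trans (le_of_eq ?_)
    · rw [← sub_mul, ← mul_sub, norm_mul, norm_mul, hgn]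
      calc ‖E x y‖ * ‖e₁ x * e₁ y - e₂ x * e₂ y‖ * (N * Real.exp (-b ^ 2 * y ^ 2))
          ≤ Real.exp (-k ^ 2 * (x - y) ^ 2) * (M * (|x| ^ 3 + |y| ^ 3)) *
            (N * Real.exp (-b ^ 2 * y ^ 2)) := by
            gcongr
            exacts [hE x y, hee x y]
        _ = M * N * ((|x| ^ 3 + |y| ^ 3) *
            (Real.exp (-k ^ 2 * (x - y) ^ 2) * Real.exp (-b ^ 2 * y ^ 2))) := by ring
        _ ≤ M * N * (80 / b ^ 3 * Real.exp (-(b ^ 2 / 4) * x ^ 2) *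
            Real.exp (-(k ^ 2 / 4) * (x - y) ^ 2)) :=
            mul_le_mul_of_nonneg_left (cubic_mul_gaussians_le hb hkb hk x y) (by positivity)
        _ = _ := by ring
    · rw [integral_const_mul, hval]
      ring
  have hsq := Hsp.norm_sq_le_of_gaussian_bound (T₁ g - T₂ g) (by positivity : 0 < b ^ 2)
    (by positivity) hpt
  have hroot : N ^ 2 * √(π / (b ^ 2 / 2)) = 2 := by
    have h1 : √(π / (b ^ 2 / 2)) ^ 2 = π / (b ^ 2 / 2) := Real.sq_sqrt (by positivity)
    have h2 : (N ^ 2 * √(π / (b ^ 2 / 2))) ^ 2 = 2 ^ 2 := by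
      rw [mul_pow, h1, ← pow_mul, hN4]
      field_simp
    exact (sq_eq_sq₀ (by positivity) (by norm_num)).1 h2
  have hsk : √(π / (k ^ 2 / 4)) = 2 * √π / k := by
    have : π / (k ^ 2 / 4) = (2 * √π / k) ^ 2 := by
      rw [div_pow, mul_pow, Real.sq_sqrt Real.pi_pos.le]
      field_simp
      norm_num
    rw [this, Real.sqrt_sq (by positivity)]
  have hfin : B ^ 2 * √(π / (b ^ 2 / 2)) = 2 * (160 * √π * M / (b ^ 3 * k)) ^ 2 := by
    rw [hBdef, hsk]
    calc _ = (M * (80 / b ^ 3) * (2 * √π / k)) ^ 2 * (N ^ 2 * √(π / (b ^ 2 / 2))) := by ring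
      _ = _ := by
        rw [hroot]
        field_simp
        ring
  have hX : 0 ≤ 160 * √π * M / (b ^ 3 * k) := by positivity
  have e : 320 * √π * M / (b ^ 3 * k) = 2 * (160 * √π * M / (b ^ 3 * k)) := by ring
  rw [e]
  refine le_of_sq_le_sq ?_ (by positivity)
  rw [hfin] at hsq
  nlinarith [sq_nonneg (160 * √π * M / (b ^ 3 * k))]

end Gaussian

/-- The operator norm scale `|μ|` is at least of order `1/W`. -/
lemma one_div_le_norm_muK {W : ℝ} {ζ : ℂ} {U : ℝ → ℂ} (hW : 0 < W) (hζ : ‖ζ‖ = 1)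
    (hre : 0 < (ζ ^ 2).re) (hα : 0 ≤ alph W ζ U) (hαW : 2 * alph W ζ U ≤ W ^ 2) :
    1 / W ≤ ‖muK W ζ U‖ := by
  set D : ℂ := (W : ℂ) ^ 2 * ζ ^ 2 + (alph W ζ U : ℂ) with hD
  have hDre : 0 < D.re := by
    have : D.re = W ^ 2 * (ζ ^ 2).re + alph W ζ U := by
      rw [hD, Complex.add_re, ← Complex.ofReal_pow, Complex.re_ofReal_mul, Complex.ofReal_re]
    rw [this]
    positivity
  have hD0 : 0 < ‖D‖ := lt_of_lt_of_le hDre (Complex.re_le_norm _)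
  have hDle : ‖D‖ ≤ 3 / 2 * W ^ 2 := by
    refine (norm_add_le _ _).trans ?_
    rw [norm_mul, norm_pow, norm_pow, hζ, Complex.norm_real, Complex.norm_real,
      Real.norm_of_nonneg hW.le, Real.norm_of_nonneg hα]
    linarith
  have hμ : ‖muK W ζ U‖ = √(π / ‖D‖) := by
    have e : (1 / 2 : ℂ) = ((1 / 2 : ℝ) : ℂ) := by push_cast; rfl
    rw [muK, ← hD, e, Complex.norm_cpow_real, ← Real.sqrt_eq_rpow, norm_div, Complex.norm_real,
      Real.norm_of_nonneg Real.pi_pos.le]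
  rw [hμ]
  apply Real.le_sqrt_of_sq_le
  rw [div_pow, one_pow, div_le_div_iff₀ (by positivity) hD0]
  nlinarith [Real.pi_gt_three, sq_nonneg W]

/-- `‖(K − K̃)g_α‖ ≤ C'·W^{−3/2+ε}·|μ|`, where `K̃` is the harmonic
approximation of `K`. -/
theorem stmt_13 :
    ∀ (C c γ : ℝ), 1 ≤ C → 0 < c → 1 < γ →
    ∀ ε : ℝ, 0 < ε →
    ∃ C' : ℝ, 0 < C' ∧ ∃ W₀ : ℝ, 0 < W₀ ∧
    ∀ (W : ℝ) (ζ : ℂ) (U : ℝ → ℂ), W₀ ≤ W → UHyp C c γ ζ U →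
    ∀ K : Hsp →L[ℂ] Hsp, IsKerOp (kerK W ζ U) K →
    ∀ Kt : Hsp →L[ℂ] Hsp, IsKerOp (kerKt W ζ U) Kt →
    ∀ g : Hsp, (∀ᵐ x : ℝ, (g : ℝ → ℂ) x = gaussF (alph W ζ U) x) →
      ‖K g - Kt g‖ ≤ C' * W ^ (-(3:ℝ)/2 + ε) * ‖muK W ζ U‖ := by
  intro C c γ hC hc _ ε hε
  obtain ⟨s, a, A, M, hs, ha, hA, hM, h⟩ := UHyp.exists_uniform_bounds hC hc
  set κ : ℝ := √(√(a / 2)) with hκ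
  have hκ0 : 0 < κ := by positivity
  refine ⟨320 * √π * M / (κ ^ 3 * √s), by positivity, max 1 (2 * √(A / 2) / s), by positivity, ?_⟩
  intro W ζ U hW hU K hK Kt hKt g hg
  obtain ⟨hsζ, hat, htA, hp, hexp⟩ := h γ ζ U hU
  have hW1 : 1 ≤ W := (le_max_left _ _).trans hW
  have hW0 : 0 < W := by linarith
  have hWs : 2 * √(A / 2) ≤ W * s := by
    rw [← div_le_iff₀ hs]
    exact (le_max_right _ _).trans hW
  have hαpos : 0 < alph W ζ U := mul_pos hW0 (Real.sqrt_pos.2 (half_pos hU.hU2pos))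
  have hαk : 2 * alph W ζ U ≤ W ^ 2 * s := by
    have h1 : √((ζ ^ 2 * deriv (deriv U) 0).re / 2) ≤ √(A / 2) := by gcongr
    rw [alph]
    nlinarith
  have hζ2 : ‖ζ ^ 2‖ = 1 := by rw [norm_pow, hU.hζ, one_pow]
  have hs1 : s ≤ 1 := hsζ.trans ((Complex.re_le_norm _).trans hζ2.le)
  have hμ := one_div_le_norm_muK hW0 hU.hζ hU.hζre hαpos.le
    (hαk.trans (mul_le_of_le_one_right (sq_nonneg W) hs1))
  set b : ℝ := √(alph W ζ U) with hbdef
  have hb0 : 0 < b := Real.sqrt_pos.2 hαpos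
  have hb2 : b ^ 2 = alph W ζ U := Real.sq_sqrt hαpos.le
  have hbκ : √W * κ ≤ b := by
    rw [hκ, hbdef, ← Real.sqrt_mul hW0.le, alph]
    gcongr
  have hk2 : (W * √s) ^ 2 = W ^ 2 * s := by rw [mul_pow, Real.sq_sqrt hs.le]
  have hUc : Continuous U := hU.hU1smooth.continuous
  have hUre : ∀ x, 0 ≤ (U x).re := fun x =>
    le_trans (by positivity) (hU.hU3 x)
  have hmain := norm_kernel_diff_gaussF_le (k := W * √s) (b := b) (M := M)
    (E := fun x y => Complex.exp (-(W : ℂ) ^ 2 * ζ ^ 2 * ((x : ℂ) - (y : ℂ)) ^ 2))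
    (e₁ := fun x => Complex.exp (-U x / 2))
    (e₂ := fun x => Complex.exp (-(deriv (deriv U) 0 / 4) * (x : ℂ) ^ 2))
    hb0 (by positivity) (by rw [hb2, hk2]; exact hαk) hM.le
    (fun x => by fun_prop) (by fun_prop) (by fun_prop)
    (fun x y => by
      have e : -(W : ℂ) ^ 2 * ζ ^ 2 * ((x : ℂ) - (y : ℂ)) ^ 2
          = ((-(W ^ 2 * (x - y) ^ 2) : ℝ) : ℂ) * ζ ^ 2 := by
        push_cast
        ring
      rw [Complex.norm_exp, e, Complex.re_ofReal_mul, hk2]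
      apply Real.exp_le_exp.2
      nlinarith [mul_le_mul_of_nonneg_left hsζ
        (mul_nonneg (sq_nonneg W) (sq_nonneg (x - y)))])
    (fun x => by
      have e : (-U x / 2).re = -(U x).re / 2 := by simp
      rw [Complex.norm_exp, Real.exp_le_one_iff, e]
      linarith [hUre x])
    (fun x => by
      have e : (-(deriv (deriv U) 0 / 4) * (x : ℂ) ^ 2).re
          = -((deriv (deriv U) 0).re / 4) * x ^ 2 := by
        rw [← Complex.ofReal_pow, Complex.re_mul_ofReal]
        simp
      rw [Complex.norm_exp, Real.exp_le_one_iff, e]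
      nlinarith [mul_nonneg hp (sq_nonneg x)])
    hexp K Kt
    (by
      convert hK using 3 with x y
      rw [kerK, ← Complex.exp_add, ← Complex.exp_add]
      congr 1
      ring)
    (by
      convert hKt using 3 with x y
      rw [kerKt, ← Complex.exp_add, ← Complex.exp_add]
      congr 1
      ring)
    g (by rw [hb2]; exact hg)
  have hW32 : W ^ (-(3 : ℝ) / 2) = 1 / √W ^ 3 := by
    rw [neg_div, Real.rpow_neg hW0.le, one_div, Real.sqrt_eq_rpow, ← Real.rpow_natCast,
      ← Real.rpow_mul hW0.le]
    norm_num
  have hWε : W ^ (-(3 : ℝ) / 2) ≤ W ^ (-(3 : ℝ) / 2 + ε) :=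
    Real.rpow_le_rpow_of_exponent_le hW1 (by linarith)
  calc ‖K g - Kt g‖ ≤ 320 * √π * M / (b ^ 3 * (W * √s)) := hmain
    _ ≤ 320 * √π * M / ((√W * κ) ^ 3 * (W * √s)) := by gcongr
    _ = 320 * √π * M / (κ ^ 3 * √s) * (1 / √W ^ 3) * (1 / W) := by
      field_simp
    _ ≤ 320 * √π * M / (κ ^ 3 * √s) * W ^ (-(3 : ℝ) / 2 + ε) * ‖muK W ζ U‖ := by
      rw [← hW32]
      gcongr
end

section
/- There exists η₀ > 0 (depending on γ) such that for every 0 < η ≤ η₀ there exist constants C', W₀ > 0 (depending on η, C, c, γ) with the following property: for all W ≥ W₀ and all x, y ∈ ℝ with |x − y| ≤ W^{−1+η}, Re U(x) ≤ W^η and Re U(y) ≤ W^η, the kernel (K*K)(x,y) = ∫_ℝ conj(K(r,x))·K(r,y) dr satisfies (K*K)(x,y) = (1 + R(x,y)) · √(π/(2W²·Re ζ²)) · exp( −(conj(U(x)) + U(y))/2 − Re U((x+y)/2) − (W²/(2·Re ζ²))·(x−y)² ), with |R(x,y)| ≤ C'·W^{−1+5ηγ}. -/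
open MeasureTheory Complex Real
open scoped ComplexInnerProductSpace

theorem norm_cexp_neg_mul_add_mul_I_sq (D s t : ℝ) :
    ‖cexp (-(D : ℂ) * ((s : ℂ) + (t : ℂ) * I) ^ 2)‖ = rexp (-D * (s ^ 2 - t ^ 2)) := by
  rw [Complex.norm_exp]
  congr 1
  simp [pow_two]

open Set in
/-- Shifting the contour of a Gaussian integral over a bounded interval. -/
theorem norm_intervalIntegral_shifted_gaussian_le {D β L δ : ℝ} (hD : 0 < D) (hL : 0 < L)
    (hδ : 0 ≤ δ) (hβ : 2 * β ^ 2 ≤ L ^ 2) {H : ℂ → ℂ}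
    (hd : DifferentiableOn ℂ H (uIcc (-L) L ×ℂ uIcc 0 β))
    (hb : ∀ z ∈ uIcc (-L) L ×ℂ uIcc 0 β, ‖H z‖ ≤ δ) :
    ‖∫ s in (-L)..L, cexp (-(D : ℂ) * ((s : ℂ) + (β : ℂ) * I) ^ 2) * H (s + β * I)‖
      ≤ 3 * δ * √(π / D) := by
  have key := Complex.integral_boundary_rect_eq_zero_of_differentiableOn
    (fun z => cexp (-(D : ℂ) * z ^ 2) * H z) ⟨-L, 0⟩ ⟨L, β⟩
    ((by fun_prop : Differentiable ℂ fun z : ℂ => cexp (-(D : ℂ) * z ^ 2)).differentiableOn.mul hd)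
  simp only at key
  have hmem : ∀ s ∈ uIcc (-L) L, ∀ t ∈ uIcc 0 β, ((s : ℂ) + (t : ℂ) * I) ∈
      uIcc (-L) L ×ℂ uIcc 0 β := by
    intro s hs t ht
    simp [mem_reProdIm, hs, ht]
  have hbot : ‖∫ s in (-L)..L, cexp (-(D : ℂ) * ((s : ℂ) + ((0 : ℝ) : ℂ) * I) ^ 2) *
      H (s + ((0 : ℝ) : ℂ) * I)‖ ≤ δ * √(π / D) := by
    have hint : Integrable fun s : ℝ => δ * rexp (-D * s ^ 2) :=
      (integrable_exp_neg_mul_sq hD).const_mul δ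
    refine (intervalIntegral.norm_integral_le_of_norm_le (g := fun s => δ * rexp (-D * s ^ 2))
      (by linarith) ?_ hint.intervalIntegrable).trans ?_
    · refine Filter.Eventually.of_forall fun s hs => ?_
      rw [norm_mul, norm_cexp_neg_mul_add_mul_I_sq, mul_comm]
      have h1 := hb _ (hmem s (by rw [uIcc_of_le (by linarith)]; exact Ioc_subset_Icc_self hs)
        0 left_mem_uIcc)
      have h2 : -D * (s ^ 2 - 0 ^ 2) = -D * s ^ 2 := by ring
      rw [h2]
      gcongr
    · rw [intervalIntegral.integral_of_le (by linarith), ← integral_gaussian D,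
        ← integral_const_mul]
      exact setIntegral_le_integral hint (Filter.Eventually.of_forall fun s => by positivity)
  have hexp : rexp (-D * (L ^ 2 - β ^ 2)) * |β| ≤ √(π / D) := by
    apply Real.le_sqrt_of_sq_le
    rw [mul_pow, sq_abs, ← Real.exp_nat_mul, le_div_iff₀ hD]
    have h1 : rexp (((2 : ℕ) : ℝ) * (-D * (L ^ 2 - β ^ 2))) ≤ rexp (-(D * β ^ 2)) := by
      apply Real.exp_le_exp.2
      push_cast
      nlinarith [mul_nonneg hD.le (sq_nonneg β)]
    have h2 : D * β ^ 2 ≤ rexp (D * β ^ 2) := by linarith [Real.add_one_le_exp (D * β ^ 2)]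
    have h3 : rexp (-(D * β ^ 2)) * rexp (D * β ^ 2) = 1 := by rw [← Real.exp_add]; simp
    have h4 : 0 < rexp (-(D * β ^ 2)) := Real.exp_pos _
    have h5 : 0 ≤ D * β ^ 2 := by positivity
    nlinarith [Real.pi_gt_three, mul_le_mul_of_nonneg_right h1 h5,
      mul_le_mul_of_nonneg_left h2 h4.le]
  have hside : ∀ x : ℝ, x ^ 2 = L ^ 2 → x ∈ uIcc (-L) L →
      ‖∫ y in (0 : ℝ)..β, cexp (-(D : ℂ) * ((x : ℂ) + (y : ℂ) * I) ^ 2) * H (x + y * I)‖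
        ≤ δ * √(π / D) := by
    intro x hx hxm
    refine (intervalIntegral.norm_integral_le_of_norm_le_const
      (C := rexp (-D * (L ^ 2 - β ^ 2)) * δ) fun y hy => ?_).trans ?_
    · have hy' := uIoc_subset_uIcc hy
      rw [norm_mul, norm_cexp_neg_mul_add_mul_I_sq, hx]
      have hyβ : y ^ 2 ≤ β ^ 2 := by
        apply sq_le_sq.2
        have := abs_sub_left_of_mem_uIcc hy'
        simpa using this
      have h1 := hb _ (hmem x hxm y hy')
      have h2 : rexp (-D * (L ^ 2 - y ^ 2)) ≤ rexp (-D * (L ^ 2 - β ^ 2)) := by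
        apply Real.exp_le_exp.2
        nlinarith
      gcongr
    · rw [sub_zero]
      nlinarith
  have hr := hside L rfl right_mem_uIcc
  have hl := hside (-L) (by ring) left_mem_uIcc
  have e : (∫ s in (-L)..L, cexp (-(D : ℂ) * ((s : ℂ) + (β : ℂ) * I) ^ 2) * H (s + β * I)) =
      (∫ s in (-L)..L, cexp (-(D : ℂ) * ((s : ℂ) + ((0 : ℝ) : ℂ) * I) ^ 2) *
        H (s + ((0 : ℝ) : ℂ) * I)) +
      I • (∫ y in (0 : ℝ)..β, cexp (-(D : ℂ) * ((L : ℂ) + (y : ℂ) * I) ^ 2) * H (L + y * I)) -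
      I • (∫ y in (0 : ℝ)..β, cexp (-(D : ℂ) * (((-L : ℝ) : ℂ) + (y : ℂ) * I) ^ 2) *
        H ((-L : ℝ) + y * I)) := by
    linear_combination -key
  rw [e]
  refine (norm_sub_le _ _).trans ?_
  refine (add_le_add_left (norm_add_le _ _) _).trans ?_
  rw [norm_smul, norm_smul, Complex.norm_I]
  linarith

open Set in
theorem norm_setIntegral_compl_shifted_gaussian_le {D β L M : ℝ} (hD : 0 < D) (hL : 0 < L)
    {k : ℝ → ℂ} (hk : ∀ s, ‖k s‖ ≤ M) :
    ‖∫ s in (Icc (-L) L)ᶜ, cexp (-(D : ℂ) * ((s : ℂ) + (β : ℂ) * I) ^ 2) * k s‖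
      ≤ 2 * M * rexp (D * β ^ 2 - D * L ^ 2 / 2) * √(π / D) := by
  have hM : 0 ≤ M := (norm_nonneg _).trans (hk 0)
  have hint : Integrable fun s : ℝ =>
      M * rexp (D * β ^ 2 - D * L ^ 2 / 2) * rexp (-(D / 2) * s ^ 2) :=
    (integrable_exp_neg_mul_sq (half_pos hD)).const_mul _
  refine (norm_integral_le_of_norm_le hint.integrableOn ?_).trans
    ((setIntegral_le_integral hint
      (Filter.Eventually.of_forall fun s => by positivity)).trans ?_)
  · refine (ae_restrict_iff' measurableSet_Icc.compl).2 (Filter.Eventually.of_forall fun s hs => ?_)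
    rw [norm_mul, norm_cexp_neg_mul_add_mul_I_sq, mul_comm, mul_assoc, ← Real.exp_add]
    have hsL : L ^ 2 ≤ s ^ 2 := by
      apply sq_le_sq.2
      rw [abs_of_pos hL]
      by_contra! h
      exact hs ⟨(abs_lt.1 h).1.le, (abs_lt.1 h).2.le⟩
    gcongr
    · exact hk s
    · nlinarith
  · rw [integral_const_mul, integral_gaussian]
    have h1 : √(π / (D / 2)) ≤ 2 * √(π / D) := by
      apply Real.sqrt_le_iff.2
      refine ⟨by positivity, ?_⟩
      rw [mul_pow, Real.sq_sqrt (by positivity)]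
      have : π / (D / 2) = 2 * (π / D) := by field_simp
      rw [this]
      have : 0 ≤ π / D := by positivity
      linarith
    have h2 : 0 ≤ M * rexp (D * β ^ 2 - D * L ^ 2 / 2) := by positivity
    nlinarith

open Set in
theorem norm_integral_shifted_gaussian_mul_sub_le {D β L δ M : ℝ} (hD : 0 < D) (hL : 0 < L)
    (hδ : 0 ≤ δ) (hβ : 2 * β ^ 2 ≤ L ^ 2) {G : ℂ → ℂ} {g : ℝ → ℂ} (hg : Continuous g)
    (hgM : ∀ s, ‖g s‖ ≤ M) (hG : DifferentiableOn ℂ G (uIcc (-L) L ×ℂ uIcc 0 β))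
    (hGδ : ∀ z ∈ uIcc (-L) L ×ℂ uIcc 0 β, ‖G z - 1‖ ≤ δ)
    (hgG : ∀ s ∈ Icc (-L) L, g s = G (s + β * I)) :
    ‖(∫ s : ℝ, cexp (-(D : ℂ) * ((s : ℂ) + (β : ℂ) * I) ^ 2) * g s) - (√(π / D) : ℂ)‖
      ≤ (3 * δ + 2 * (M + 1) * rexp (D * β ^ 2 - D * L ^ 2 / 2)) * √(π / D) := by
  have hDre : 0 < (D : ℂ).re := by simpa
  have hi := GaussianFourier.integrable_cexp_neg_mul_sq_add_real_mul_I hDre β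
  have hv : ∫ s : ℝ, cexp (-(D : ℂ) * ((s : ℂ) + (β : ℂ) * I) ^ 2) = (√(π / D) : ℂ) := by
    rw [GaussianFourier.integral_cexp_neg_mul_sq_add_real_mul_I hDre, Real.sqrt_eq_rpow,
      Complex.ofReal_cpow (by positivity)]
    push_cast
    rfl
  have hig : Integrable fun s : ℝ => cexp (-(D : ℂ) * ((s : ℂ) + (β : ℂ) * I) ^ 2) * g s :=
    hi.mul_bdd (c := M) hg.aestronglyMeasurable (Filter.Eventually.of_forall hgM)
  have hi1 : Integrable fun s : ℝ =>
      cexp (-(D : ℂ) * ((s : ℂ) + (β : ℂ) * I) ^ 2) * (g s - 1) := by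
    simp only [mul_sub, mul_one]
    exact hig.sub hi
  have e : (∫ s : ℝ, cexp (-(D : ℂ) * ((s : ℂ) + (β : ℂ) * I) ^ 2) * g s) - (√(π / D) : ℂ) =
      ∫ s : ℝ, cexp (-(D : ℂ) * ((s : ℂ) + (β : ℂ) * I) ^ 2) * (g s - 1) := by
    rw [← hv, ← integral_sub hig hi]
    simp [mul_sub]
  rw [e, ← integral_add_compl (measurableSet_Icc (a := -L) (b := L)) hi1]
  have htail := norm_setIntegral_compl_shifted_gaussian_le (β := β) (k := fun s => g s - 1)
    (M := M + 1) hD hL fun s => (norm_sub_le _ _).trans (by simpa using hgM s)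
  have hmid := norm_intervalIntegral_shifted_gaussian_le (H := fun z => G z - 1) hD hL hδ hβ
    (hG.sub_const 1) hGδ
  rw [intervalIntegral.integral_of_le (by linarith), ← integral_Icc_eq_integral_Ioc] at hmid
  have hc : ∫ s in Icc (-L) L, cexp (-(D : ℂ) * ((s : ℂ) + (β : ℂ) * I) ^ 2) * (g s - 1) =
      ∫ s in Icc (-L) L, cexp (-(D : ℂ) * ((s : ℂ) + (β : ℂ) * I) ^ 2) * (G (s + β * I) - 1) :=
    setIntegral_congr_fun measurableSet_Icc fun s hs => by simp only [hgG s hs]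
  rw [hc]
  refine (norm_add_le _ _).trans ?_
  linarith

open Metric in
/-- A differential inequality `‖f'‖ ≤ C (max 1 (Re f)) ^ γ` keeps `Re f` below twice its bound at
the centre of a sufficiently small ball. -/
theorem re_le_two_mul_of_norm_deriv_le {f : ℂ → ℂ} {C γ A r : ℝ} {z₀ : ℂ} (hC : 0 ≤ C)
    (hγ : 0 ≤ γ) (hA : 1 ≤ A) (hf : ∀ z ∈ closedBall z₀ r, DifferentiableAt ℂ f z)
    (hb : ∀ z ∈ closedBall z₀ r, ‖deriv f z‖ ≤ C * (max 1 (f z).re) ^ γ)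
    (h0 : (f z₀).re ≤ A) (hr : C * (2 * A) ^ γ * r < A) {z : ℂ} (hz : z ∈ closedBall z₀ r) :
    (f z).re ≤ 2 * A := by
  have hzr : ‖z - z₀‖ ≤ r := by simpa [dist_eq_norm] using hz
  have hmem : ∀ t ∈ Set.Icc (0 : ℝ) 1, z₀ + t * (z - z₀) ∈ closedBall z₀ r := by
    intro t ht
    simp only [mem_closedBall, dist_eq_norm, add_sub_cancel_left, norm_mul, Complex.norm_real,
      Real.norm_eq_abs, abs_of_nonneg ht.1]
    nlinarith [ht.1, ht.2, norm_nonneg (z - z₀)]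
  have hd : ∀ t ∈ Set.Icc (0 : ℝ) 1, HasDerivAt (fun t : ℝ => (f (z₀ + t * (z - z₀))).re)
      (deriv f (z₀ + t * (z - z₀)) * (z - z₀)).re t := by
    intro t ht
    have h1 : HasDerivAt (fun w : ℂ => z₀ + w * (z - z₀)) (z - z₀) (t : ℂ) := by
      simpa using ((hasDerivAt_id (t : ℂ)).mul_const (z - z₀)).const_add z₀
    have h2 := (hf _ (hmem t ht)).hasDerivAt.comp (t : ℂ) h1
    exact h2.real_of_complex
  have := image_le_of_deriv_right_lt_deriv_boundary
    (f := fun t : ℝ => (f (z₀ + t * (z - z₀))).re) (a := 0) (b := 1)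
    (fun t ht => (hd t ht).continuousAt.continuousWithinAt)
    (fun t ht => (hd t (Set.Ico_subset_Icc_self ht)).hasDerivWithinAt)
    (B := fun t => A + A * t) (B' := fun _ => A) (by simpa using h0)
    (fun t => by simpa using ((hasDerivAt_id t).const_mul A).const_add A)
    (fun t ht heq => by
      have hm := hmem t (Set.Ico_subset_Icc_self ht)
      have hle : max 1 (f (z₀ + t * (z - z₀))).re ≤ 2 * A := by
        apply max_le (by linarith)
        rw [heq]
        nlinarith [ht.2]
      calc (deriv f (z₀ + t * (z - z₀)) * (z - z₀)).re
          ≤ ‖deriv f (z₀ + t * (z - z₀)) * (z - z₀)‖ := Complex.re_le_norm _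
        _ = ‖deriv f (z₀ + t * (z - z₀))‖ * ‖z - z₀‖ := norm_mul _ _
        _ ≤ (C * (2 * A) ^ γ) * r := by
            have h1 : ‖deriv f (z₀ + t * (z - z₀))‖ ≤ C * (2 * A) ^ γ :=
              (hb _ hm).trans (by gcongr)
            gcongr
        _ < A := hr)
    (Set.right_mem_Icc.2 zero_le_one)
  simp only [Complex.ofReal_one, one_mul, add_sub_cancel] at this
  linarith

open Metric in
theorem norm_deriv_le_of_norm_deriv_le_rpow {f : ℂ → ℂ} {C γ A r : ℝ} {z₀ : ℂ} (hC : 0 ≤ C)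
    (hγ : 0 ≤ γ) (hA : 1 ≤ A) (hf : ∀ z ∈ closedBall z₀ r, DifferentiableAt ℂ f z)
    (hb : ∀ z ∈ closedBall z₀ r, ‖deriv f z‖ ≤ C * (max 1 (f z).re) ^ γ)
    (h0 : (f z₀).re ≤ A) (hr : C * (2 * A) ^ γ * r < A) {z : ℂ} (hz : z ∈ closedBall z₀ r) :
    ‖deriv f z‖ ≤ C * (2 * A) ^ γ := by
  refine (hb z hz).trans ?_
  have := re_le_two_mul_of_norm_deriv_le hC hγ hA hf hb h0 hr hz
  have : max 1 (f z).re ≤ 2 * A := max_le (by linarith) this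
  gcongr

theorem deriv_deriv_nonneg_of_isLocalMin {h : ℝ → ℝ} {x : ℝ} (hmin : IsLocalMin h x)
    (hc : ContinuousAt h x) : 0 ≤ deriv (deriv h) x := by
  by_contra! hneg
  have hmax := isLocalMax_of_deriv_deriv_neg hneg hmin.deriv_eq_zero hc
  have heq : h =ᶠ[nhds x] fun _ => h x := by
    filter_upwards [hmin, hmax] with y h1 h2
    exact le_antisymm h2 h1
  rw [heq.deriv.deriv_eq] at hneg
  simp at hneg

theorem closedBall_ofReal_subset_strip {c r : ℝ} (hr : r ≤ c) (x : ℝ) {z : ℂ}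
    (hz : z ∈ Metric.closedBall (x : ℂ) r) : |z.im| ≤ c := by
  have h1 : ‖z - x‖ ≤ r := by simpa [dist_eq_norm] using hz
  have h2 := Complex.abs_im_le_norm (z - x)
  simp only [Complex.sub_im, Complex.ofReal_im, sub_zero] at h2
  linarith

namespace UHyp

variable {C c γ : ℝ} {ζ : ℂ} {U : ℝ → ℂ}

theorem re_nonneg (h : UHyp C c γ ζ U) (hC : 0 < C) (x : ℝ) : 0 ≤ (U x).re :=
  le_trans (by positivity) (h.hU3 x)

theorem two_div_le_re_deriv_deriv (h : UHyp C c γ ζ U) :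
    2 / C ≤ (deriv (deriv U) 0).re := by
  have hdU : Differentiable ℝ U := h.hU1smooth.differentiable (by simp)
  have hdU' : Differentiable ℝ (deriv U) :=
    ((contDiff_infty_iff_deriv (𝕜 := ℝ)).1 h.hU1smooth).2.differentiable (by simp)
  have hre : ∀ {f : ℝ → ℂ} {f' : ℂ} {x : ℝ}, HasDerivAt f f' x →
      HasDerivAt (fun t => (f t).re) f'.re x := fun hf =>
    Complex.reCLM.hasFDerivAt.comp_hasDerivAt _ hf
  have h1 : ∀ x, HasDerivAt (fun t => (U t).re - t ^ 2 / C) ((deriv U x).re - 2 * x / C) x := by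
    intro x
    exact ((hre (hdU x).hasDerivAt).sub ((hasDerivAt_pow 2 x).div_const C)).congr_deriv (by simp)
  have h2 : HasDerivAt (fun x => (deriv U x).re - 2 * x / C)
      ((deriv (deriv U) 0).re - 2 / C) 0 :=
    ((hre (hdU' 0).hasDerivAt).sub
      (((hasDerivAt_id (0 : ℝ)).const_mul 2).div_const C)).congr_deriv (by simp)
  have h3 := deriv_deriv_nonneg_of_isLocalMin (h := fun t => (U t).re - t ^ 2 / C) (x := 0) (by
    have : ∀ᶠ t : ℝ in nhds 0, |t| < 1 := by
      filter_upwards [Metric.ball_mem_nhds (0 : ℝ) one_pos] with t ht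
      simpa using ht
    filter_upwards [this] with t ht
    have := h.hU3 t
    rw [min_eq_right (by nlinarith [abs_lt.1 ht])] at this
    simp only [h.hU1zero, Complex.zero_re]
    have e : 1 / C * t ^ 2 = t ^ 2 / C := by ring
    simp only [ne_eq, OfNat.ofNat_ne_zero, not_false_eq_true, zero_pow, zero_div, sub_zero]
    linarith) (h1 0).continuousAt
  rw [show deriv (fun t => (U t).re - t ^ 2 / C) = fun x => (deriv U x).re - 2 * x / C from
    funext fun x => (h1 x).deriv, h2.deriv] at h3
  linarith

theorem norm_deriv_deriv_le (h : UHyp C c γ ζ U) (hC : 1 ≤ C) (hγ : 1 < γ) {r : ℝ} (hr : 0 < r)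
    (hrc : r ≤ c) (hr1 : C * 2 ^ γ * r < 1) :
    ‖deriv (deriv U) 0‖ ≤ C * 2 ^ γ / r := by
  obtain ⟨UC, hUC, han, hbd⟩ := h.hU4
  have hdiff : ∀ z, |z.im| ≤ c → DifferentiableAt ℂ UC z := fun z hz =>
    (han z hz).differentiableAt
  have hstrip : ∀ z ∈ Metric.closedBall (0 : ℂ) r, |z.im| ≤ c := fun z hz =>
    closedBall_ofReal_subset_strip hrc 0 (by simpa using hz)
  have hc : 0 ≤ c := hr.le.trans hrc
  have h1 : deriv U = fun x : ℝ => deriv UC x := by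
    ext x
    have := (hdiff x (by simpa)).hasDerivAt.comp_ofReal
    rw [show (fun y : ℝ => UC y) = U from funext hUC] at this
    exact this.deriv
  have h2 : deriv (deriv U) 0 = deriv (deriv UC) 0 := by
    rw [h1]
    have := (han ((0 : ℝ) : ℂ) (by simpa)).deriv.differentiableAt.hasDerivAt.comp_ofReal
    simpa using this.deriv
  rw [h2]
  have h0 : UC 0 = 0 := by simpa [h.hU1zero] using hUC 0
  refine Complex.norm_deriv_le_of_forall_mem_sphere_norm_le hr ?_ ?_
  · apply DifferentiableOn.diffContOnCl
    intro z hz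
    have := hstrip z (Metric.closure_ball_subset_closedBall hz)
    exact (han z this).deriv.differentiableAt.differentiableWithinAt
  · intro z hz
    have := norm_deriv_le_of_norm_deriv_le_rpow (f := UC) (z₀ := 0) (A := 1) (r := r)
      (by linarith) (by linarith) le_rfl (fun z hz => hdiff z (hstrip z hz))
      (fun z hz => hbd z (hstrip z hz)) (by simp [h0]) (by simpa using hr1)
      (Metric.sphere_subset_closedBall hz)
    simpa using this

/-- The hypotheses bound `Re ζ²` below in terms of `C`, `c` and `γ` only. -/
theorem le_re_sq (h : UHyp C c γ ζ U) (hC : 1 ≤ C) (hγ : 1 < γ) {r : ℝ} (hr : 0 < r)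
    (hrc : r ≤ c) (hr1 : C * 2 ^ γ * r < 1) :
    2 / C * (r / (C * 2 ^ γ)) ≤ (ζ ^ 2).re := by
  have hlow := h.two_div_le_re_deriv_deriv
  have hup := h.norm_deriv_deriv_le hC hγ hr hrc hr1
  have hK : 0 < C * 2 ^ γ := by positivity
  set q := deriv (deriv U) 0
  have hn : ‖ζ ^ 2‖ = 1 := by simp [h.hζ]
  have hn2 : (ζ ^ 2).re ^ 2 + (ζ ^ 2).im ^ 2 = 1 := by
    have := Complex.sq_norm (ζ ^ 2)
    rw [hn, Complex.normSq_apply] at this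
    linarith
  have h1 := h.hU2im
  have h2 := h.hU2pos
  have hre : q.re = (ζ ^ 2 * q).re * (ζ ^ 2).re := by
    rw [Complex.mul_im] at h1
    rw [Complex.mul_re]
    linear_combination (-q.re) * hn2 + (ζ ^ 2).im * h1
  have hle : (ζ ^ 2 * q).re ≤ C * 2 ^ γ / r := by
    refine (Complex.re_le_norm _).trans ?_
    rw [norm_mul, hn, one_mul]
    exact hup
  have h3 : 2 / C ≤ C * 2 ^ γ / r * (ζ ^ 2).re :=
    hlow.trans (hre.trans_le (mul_le_mul_of_nonneg_right hle h.hζre.le))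
  calc 2 / C * (r / (C * 2 ^ γ)) ≤ C * 2 ^ γ / r * (ζ ^ 2).re * (r / (C * 2 ^ γ)) := by gcongr
    _ = (ζ ^ 2).re := by field_simp

end UHyp

namespace UHyp

variable {C c γ : ℝ} {ζ : ℂ} {U : ℝ → ℂ}

/-- `Re U` extends analytically, with a Lipschitz bound governed by the local size of `Re U`. -/
theorem exists_extension_re (h : UHyp C c γ ζ U) (hC : 1 ≤ C) (hγ : 1 < γ) :
    ∃ V : ℂ → ℂ, (∀ x : ℝ, V x = ((U x).re : ℂ)) ∧ ∀ x A r : ℝ, 1 ≤ A → (U x).re ≤ A → r ≤ c →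
      C * (2 * A) ^ γ * r < A →
      (∀ z ∈ Metric.closedBall (x : ℂ) r, DifferentiableAt ℂ V z) ∧
      ∀ z ∈ Metric.closedBall (x : ℂ) r, ∀ w ∈ Metric.closedBall (x : ℂ) r,
        ‖V z - V w‖ ≤ C * (2 * A) ^ γ * ‖z - w‖ := by
  obtain ⟨UC, hUC, han, hbd⟩ := h.hU4
  let UD : ℂ → ℂ := starRingEnd ℂ ∘ UC ∘ starRingEnd ℂ
  refine ⟨fun z => (UC z + UD z) / 2, fun x => ?_, fun x A r hA hx hrc hr => ?_⟩
  · simp [UD, hUC, Complex.add_conj]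
  · have hstrip : ∀ z ∈ Metric.closedBall (x : ℂ) r, |z.im| ≤ c := fun z hz =>
      closedBall_ofReal_subset_strip hrc x hz
    have hd : ∀ z ∈ Metric.closedBall (x : ℂ) r, DifferentiableAt ℂ UC z := fun z hz =>
      (han z (hstrip z hz)).differentiableAt
    have hconj : ∀ z ∈ Metric.closedBall (x : ℂ) r,
        starRingEnd ℂ z ∈ Metric.closedBall (x : ℂ) r := by
      intro z hz
      rw [Metric.mem_closedBall] at hz ⊢
      rwa [← Complex.dist_conj_conj, Complex.conj_conj, Complex.conj_ofReal]
    have hlip : ∀ z ∈ Metric.closedBall (x : ℂ) r, ∀ w ∈ Metric.closedBall (x : ℂ) r,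
        ‖UC z - UC w‖ ≤ C * (2 * A) ^ γ * ‖z - w‖ := fun z hz w hw =>
      Convex.norm_image_sub_le_of_norm_deriv_le hd (fun u hu =>
        norm_deriv_le_of_norm_deriv_le_rpow (by linarith) (by linarith) hA hd
          (fun z hz => hbd z (hstrip z hz)) (by rwa [hUC]) hr hu)
        (convex_closedBall _ _) hw hz
    refine ⟨fun z hz => ?_, fun z hz w hw => ?_⟩
    · have h1 : DifferentiableAt ℂ UD z := by
        have := (hd _ (hconj z hz)).conj_conj
        rwa [Complex.conj_conj] at this
      exact ((hd z hz).add h1).div_const 2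
    · have h1 := hlip z hz w hw
      have h2 : ‖UD z - UD w‖ ≤ C * (2 * A) ^ γ * ‖z - w‖ := by
        have := hlip _ (hconj z hz) _ (hconj w hw)
        simp only [UD, Function.comp_apply]
        rw [← map_sub, RCLike.norm_conj]
        rwa [← map_sub, RCLike.norm_conj] at this
      have e : (UC z + UD z) / 2 - (UC w + UD w) / 2 = ((UC z - UC w) + (UD z - UD w)) / 2 := by
        ring
      simp only [e, norm_div, Complex.norm_ofNat]
      have := norm_add_le (UC z - UC w) (UD z - UD w)
      linarith

theorem conj_kerK_mul_kerK (h : UHyp C c γ ζ U) (W x y s : ℝ) :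
    starRingEnd ℂ (kerK W ζ U (s + (x + y) / 2) x) * kerK W ζ U (s + (x + y) / 2) y =
      Complex.exp (-(starRingEnd ℂ (U x) + U y) / 2 - (((U ((x + y)/2)).re : ℝ) : ℂ)
        - (((W^2 / (2 * (ζ^2).re) : ℝ) : ℂ)) * ((x : ℂ) - (y : ℂ))^2) *
      (cexp (-((2 * W ^ 2 * (ζ ^ 2).re : ℝ) : ℂ) *
          ((s : ℂ) + (((ζ ^ 2).im * ((x - y) / 2) / (ζ ^ 2).re : ℝ) : ℂ) * I) ^ 2) *
        cexp (-(((U (s + (x + y) / 2)).re : ℂ) - ((U ((x + y) / 2)).re : ℂ)))) := by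
  have ha := h.hζre
  have hn2 : (ζ ^ 2).re ^ 2 + (ζ ^ 2).im ^ 2 = 1 := by
    have hn : ‖ζ ^ 2‖ = 1 := by simp [h.hζ]
    have := Complex.sq_norm (ζ ^ 2)
    rw [hn, Complex.normSq_apply] at this
    linarith
  have hz : ζ ^ 2 = ((ζ ^ 2).re : ℂ) + ((ζ ^ 2).im : ℂ) * I := (Complex.re_add_im _).symm
  have hzc : (starRingEnd ℂ ζ) ^ 2 = ((ζ ^ 2).re : ℂ) - ((ζ ^ 2).im : ℂ) * I := by
    rw [← map_pow]
    apply Complex.ext <;> simp only [Complex.conj_re, Complex.conj_im] <;> simp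
  set a := (ζ ^ 2).re
  set b := (ζ ^ 2).im
  have hab : (a : ℂ) ^ 2 + (b : ℂ) ^ 2 = 1 := by exact_mod_cast hn2
  have hau : (a : ℂ) * (a : ℂ)⁻¹ = 1 := mul_inv_cancel₀ (by exact_mod_cast ha.ne')
  have hU := Complex.add_conj (U (s + (x + y) / 2))
  unfold kerK
  rw [← Complex.exp_conj, ← Complex.exp_add, ← Complex.exp_add, ← Complex.exp_add]
  congr 1
  simp only [map_sub, map_mul, map_neg, map_pow, map_div₀, Complex.conj_ofReal, hzc, map_ofNat]
  rw [hz]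
  push_cast at hU ⊢
  simp only [div_eq_mul_inv, mul_inv] at hU ⊢
  linear_combination (4 * (W : ℂ) ^ 2 * b * I * s * ((x - y) / 2) + 2 * (W : ℂ) ^ 2 *
      ((x - y) / 2) ^ 2 * (-(a : ℂ)⁻¹ + a * (a * (a : ℂ)⁻¹ + 1))) * hau +
    2 * (W : ℂ) ^ 2 * a * b ^ 2 * ((x - y) / 2) ^ 2 * (a : ℂ)⁻¹ ^ 2 * I_sq -
    2 * (W : ℂ) ^ 2 * ((x - y) / 2) ^ 2 * a * (a : ℂ)⁻¹ ^ 2 * hab - (1 / 2) * hU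

open Set in
/-- The estimate at fixed `W`, with all smallness requirements explicit. -/
theorem exists_integral_eq (h : UHyp C c γ ζ U) (hC : 1 ≤ C) (hγ : 1 < γ)
    {W A L ε x y : ℝ} (hW : 0 < W) (hA : 1 ≤ A) (hL : 0 < L) (hUx : (U x).re ≤ A)
    (hxy : |x - y| ≤ ε) (hεL : ε / 2 + ε / (2 * (ζ ^ 2).re) ≤ L)
    (hεL' : 2 * (ε / (2 * (ζ ^ 2).re)) ^ 2 ≤ L ^ 2) (hc : 2 * L ≤ c)
    (hK : C * (2 * A) ^ γ * (2 * L) < 1) :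
    ∃ R : ℂ,
      (∫ r : ℝ, starRingEnd ℂ (kerK W ζ U r x) * kerK W ζ U r y) =
        (1 + R) * ((Real.sqrt (π / (2 * W^2 * (ζ^2).re)) : ℂ) *
          Complex.exp (-(starRingEnd ℂ (U x) + U y) / 2
            - (((U ((x + y)/2)).re : ℝ) : ℂ)
            - (((W^2 / (2 * (ζ^2).re) : ℝ) : ℂ)) * ((x : ℂ) - (y : ℂ))^2)) ∧
      ‖R‖ ≤ 12 * (C * (2 * A) ^ γ * L) +
        4 * rexp (2 * A + W ^ 2 * ε ^ 2 / (2 * (ζ ^ 2).re) - (ζ ^ 2).re * W ^ 2 * L ^ 2) := by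
  obtain ⟨V, hV, hVA⟩ := h.exists_extension_re hC hγ
  obtain ⟨hVd, hVl⟩ := hVA x A (2 * L) hA hUx hc (by linarith)
  have ha := h.hζre
  have hn2 : (ζ ^ 2).re ^ 2 + (ζ ^ 2).im ^ 2 = 1 := by
    have hn : ‖ζ ^ 2‖ = 1 := by simp [h.hζ]
    have := Complex.sq_norm (ζ ^ 2)
    rw [hn, Complex.normSq_apply] at this
    linarith
  have hker := h.conj_kerK_mul_kerK W x y
  set E := Complex.exp (-(starRingEnd ℂ (U x) + U y) / 2 - (((U ((x + y)/2)).re : ℝ) : ℂ)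
        - (((W^2 / (2 * (ζ^2).re) : ℝ) : ℂ)) * ((x : ℂ) - (y : ℂ))^2)
  set a := (ζ ^ 2).re
  set b := (ζ ^ 2).im
  set D := 2 * W ^ 2 * a with hDdef
  set β := b * ((x - y) / 2) / a with hβdef
  set m := (x + y) / 2 with hm
  have hD : 0 < D := by positivity
  have hε : 0 ≤ ε := (abs_nonneg _).trans hxy
  have hβ : |β| ≤ ε / (2 * a) := by
    have hb : |b| ≤ 1 := abs_le_one_iff_mul_self_le_one.2 (by nlinarith [sq_nonneg a])
    rw [hβdef, abs_div, abs_mul, abs_div, abs_of_pos ha, abs_two, div_le_div_iff₀ ha (by positivity)]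
    nlinarith [mul_le_mul hb hxy (abs_nonneg _) zero_le_one]
  have hβsq : β ^ 2 ≤ (ε / (2 * a)) ^ 2 := by
    rw [← sq_abs β]
    gcongr
  have hmx : ‖(m : ℂ) - x‖ ≤ ε / 2 := by
    rw [← Complex.ofReal_sub, Complex.norm_real, Real.norm_eq_abs, hm,
      show (x + y) / 2 - x = -(x - y) / 2 by ring, abs_div, abs_neg, abs_two]
    linarith
  have hε2 : ε / 2 ≤ L := by
    have : 0 ≤ ε / (2 * a) := by positivity
    linarith
  have hmb : (m : ℂ) ∈ Metric.closedBall (x : ℂ) (2 * L) := by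
    rw [mem_closedBall_iff_norm]
    linarith
  have hrect : ∀ z ∈ uIcc (-L) L ×ℂ uIcc 0 β,
      ‖(m : ℂ) - β * I + z - m‖ ≤ L + |β| := by
    intro z hz
    rw [mem_reProdIm, uIcc_of_le (by linarith)] at hz
    have h1 : |z.re| ≤ L := abs_le.2 hz.1
    have h2 : |β - z.im| ≤ |β - 0| := abs_sub_right_of_mem_uIcc hz.2
    rw [abs_sub_comm, sub_zero] at h2
    have e : (m : ℂ) - β * I + z - m = ⟨z.re, z.im - β⟩ := by
      apply Complex.ext
      · simp
      · simp
        ring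
    rw [e]
    exact (Complex.norm_le_abs_re_add_abs_im _).trans (add_le_add h1 h2)
  have hball : ∀ z ∈ uIcc (-L) L ×ℂ uIcc 0 β,
      (m : ℂ) - β * I + z ∈ Metric.closedBall (x : ℂ) (2 * L) := by
    intro z hz
    rw [mem_closedBall_iff_norm]
    calc ‖(m : ℂ) - β * I + z - x‖ = ‖((m : ℂ) - β * I + z - m) + (m - x)‖ := by
          congr 1
          ring
      _ ≤ (L + |β|) + ε / 2 := (norm_add_le _ _).trans (add_le_add (hrect z hz) hmx)
      _ ≤ 2 * L := by linarith
  have hK0 : 0 < C * (2 * A) ^ γ := by positivity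
  set K := C * (2 * A) ^ γ
  have hUm : (U m).re ≤ 2 * A := by
    have h1 := hVl m hmb x (by simp; linarith)
    rw [hV, hV, ← Complex.ofReal_sub, Complex.norm_real, Real.norm_eq_abs] at h1
    have h2 : K * ‖(m : ℂ) - x‖ ≤ K * (2 * L) := by
      gcongr
      linarith
    linarith [(abs_le.1 (h1.trans h2)).2]
  have hVrect : ∀ z ∈ uIcc (-L) L ×ℂ uIcc 0 β, ‖V ((m : ℂ) - β * I + z) - V m‖ ≤ K * (2 * L) := by
    intro z hz
    refine (hVl _ (hball z hz) _ hmb).trans ?_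
    have := hrect z hz
    gcongr
    have : 0 ≤ ε / 2 := by positivity
    linarith
  have hUcont : Continuous U := h.hU1smooth.continuous
  have key := norm_integral_shifted_gaussian_mul_sub_le (D := D) (β := β) (L := L)
    (δ := 4 * (K * L)) (M := rexp (2 * A))
    (G := fun z => cexp (-(V ((m : ℂ) - β * I + z) - V m)))
    (g := fun s => cexp (-(((U (s + m)).re : ℂ) - ((U m).re : ℂ)))) hD hL (by positivity)
    (by linarith) (by fun_prop)
    (fun s => by
      rw [Complex.norm_exp]
      apply Real.exp_le_exp.2
      have := h.re_nonneg (by linarith) (s + m)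
      simp
      linarith)
    (fun z hz => by
      have h1 : DifferentiableAt ℂ (fun z => V ((m : ℂ) - β * I + z)) z :=
        (hVd _ (hball z hz)).comp z (by fun_prop)
      exact ((h1.sub_const _).neg.cexp).differentiableWithinAt)
    (fun z hz => by
      have h1 := hVrect z hz
      refine (Complex.norm_exp_sub_one_le ?_).trans ?_
      · rw [norm_neg]
        linarith
      · rw [norm_neg]
        linarith)
    (fun s _ => by
      have e : (m : ℂ) - β * I + (s + β * I) = ((s + m : ℝ) : ℂ) := by
        push_cast
        ring
      simp only [e, hV])
  set J := ∫ s : ℝ, cexp (-(D : ℂ) * ((s : ℂ) + (β : ℂ) * I) ^ 2) *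
    cexp (-(((U (s + m)).re : ℂ) - ((U m).re : ℂ)))
  have hint : (∫ r : ℝ, starRingEnd ℂ (kerK W ζ U r x) * kerK W ζ U r y) = E * J := by
    rw [← integral_add_right_eq_self _ m, ← integral_const_mul]
    exact integral_congr_ae (Filter.Eventually.of_forall fun s => hker s)
  have hS : 0 < √(π / D) := Real.sqrt_pos.2 (by positivity)
  have hS' : (√(π / D) : ℂ) ≠ 0 := by exact_mod_cast hS.ne'
  refine ⟨(J - √(π / D)) / √(π / D), ?_, ?_⟩
  · rw [hint]
    field_simp
    ring
  · rw [norm_div, Complex.norm_real, Real.norm_of_nonneg hS.le, div_le_iff₀ hS]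
    refine key.trans ?_
    gcongr ?_ * _
    have h1 : (1 : ℝ) ≤ rexp (2 * A) := Real.one_le_exp (by linarith)
    have h2 : rexp (D * β ^ 2 - D * L ^ 2 / 2) ≤
        rexp (W ^ 2 * ε ^ 2 / (2 * a) - a * W ^ 2 * L ^ 2) := by
      apply Real.exp_le_exp.2
      have h3 : D * β ^ 2 ≤ D * (ε / (2 * a)) ^ 2 := by gcongr
      have h4 : D * (ε / (2 * a)) ^ 2 = W ^ 2 * ε ^ 2 / (2 * a) := by
        rw [hDdef]
        field_simp
      have h5 : D * L ^ 2 / 2 = a * W ^ 2 * L ^ 2 := by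
        rw [hDdef]
        ring
      linarith
    have h6 : 2 * (rexp (2 * A) + 1) * rexp (D * β ^ 2 - D * L ^ 2 / 2) ≤
        (4 * rexp (2 * A)) * rexp (W ^ 2 * ε ^ 2 / (2 * a) - a * W ^ 2 * L ^ 2) :=
      mul_le_mul (by linarith) h2 (Real.exp_pos _).le (by positivity)
    have h7 : 2 * A + W ^ 2 * ε ^ 2 / (2 * a) - a * W ^ 2 * L ^ 2 =
        2 * A + (W ^ 2 * ε ^ 2 / (2 * a) - a * W ^ 2 * L ^ 2) := by ring
    rw [h7, Real.exp_add]
    linarith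

end UHyp

open Filter in
theorem eventually_four_mul_exp_le_inv {η a₀ : ℝ} (hη : 0 < η) (ha₀ : 0 < a₀) :
    ∀ᶠ W : ℝ in atTop, ∀ a, a₀ ≤ a →
      4 * rexp (2 * W ^ η + (W ^ η) ^ 2 / (2 * a) - a * (W ^ η) ^ 4) ≤ W ^ (-1 : ℝ) := by
  have ht : Tendsto (fun W : ℝ => W ^ η) atTop atTop := tendsto_rpow_atTop hη
  have hz := (tendsto_rpow_mul_exp_neg_mul_atTop_nhds_zero (1 / η) 1 one_pos).comp ht
  filter_upwards [ht.eventually_ge_atTop 3, ht.eventually_ge_atTop (1 / a₀),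
    eventually_gt_atTop 0, hz.eventually_le_const (show (0 : ℝ) < 1 / 4 by norm_num)]
    with W h3 h4 hW h5 a ha
  have e : (W ^ η) ^ (1 / η) = W := by
    rw [← Real.rpow_mul hW.le, mul_one_div_cancel hη.ne', Real.rpow_one]
  simp only [Function.comp_apply, e] at h5
  set t := W ^ η
  have hapos : 0 < a := ha₀.trans_le ha
  have hat : 1 ≤ a * t := by
    rw [div_le_iff₀ ha₀] at h4
    nlinarith
  have hle : 2 * t + t ^ 2 / (2 * a) - a * t ^ 4 ≤ -1 * t := by
    have h6 : t ^ 2 / (2 * a) ≤ t ^ 3 / 2 := by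
      rw [div_le_div_iff₀ (by positivity) two_pos]
      nlinarith [mul_le_mul_of_nonneg_left hat (sq_nonneg t)]
    have h7 : t ^ 3 ≤ a * t ^ 4 := by
      nlinarith [mul_le_mul_of_nonneg_left hat (show 0 ≤ t ^ 3 by positivity)]
    have h8 : 9 * t ≤ t ^ 3 := by nlinarith [mul_le_mul h3 h3 (by norm_num) (by linarith)]
    linarith
  rw [Real.rpow_neg_one, ← one_div, le_div_iff₀ hW]
  nlinarith [Real.exp_le_exp.2 hle, Real.exp_pos (2 * t + t ^ 2 / (2 * a) - a * t ^ 4)]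

/-- The estimate at a scale `W` beyond which the error terms are under control. -/
theorem UHyp.exists_integral_eq_rpow {C c γ η a₀ : ℝ} {ζ : ℂ} {U : ℝ → ℂ} (hU : UHyp C c γ ζ U)
    (hC : 1 ≤ C) (hγ : 1 < γ) (hη : 0 < η) (hηη : η ≤ η * γ) (ha₀ : 0 < a₀)
    (ha : a₀ ≤ (ζ ^ 2).re) {W x y : ℝ} (hW1 : 1 ≤ W) (h1 : 1 / 2 + 1 / (2 * a₀) ≤ W ^ η)
    (h2 : 1 / a₀ ≤ W ^ η) (h3 : W ^ (-(1 - 2 * η)) ≤ c / 2)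
    (h4 : W ^ (-(1 - 2 * η - η * γ)) < 1 / (2 * (C * 2 ^ γ)))
    (h5 : 4 * rexp (2 * W ^ η + (W ^ η) ^ 2 / (2 * (ζ ^ 2).re) - (ζ ^ 2).re * (W ^ η) ^ 4)
      ≤ W ^ (-1 : ℝ))
    (hxy : |x - y| ≤ W ^ (-1 + η)) (hUx : (U x).re ≤ W ^ η) :
    ∃ R : ℂ,
      (∫ r : ℝ, starRingEnd ℂ (kerK W ζ U r x) * kerK W ζ U r y) =
        (1 + R) * ((Real.sqrt (π / (2 * W^2 * (ζ^2).re)) : ℂ) *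
          Complex.exp (-(starRingEnd ℂ (U x) + U y) / 2
            - (((U ((x + y)/2)).re : ℝ) : ℂ)
            - (((W^2 / (2 * (ζ^2).re) : ℝ) : ℂ)) * ((x : ℂ) - (y : ℂ))^2)) ∧
      ‖R‖ ≤ (12 * (C * 2 ^ γ) + 1) * W ^ (-1 + 5*η*γ) := by
  have hγ0 : 0 < γ := by linarith
  have hW0 : 0 < W := by linarith
  have hK : 0 < C * 2 ^ γ := by positivity
  set K : ℝ := C * 2 ^ γ with hKdef
  have hapos := hU.hζre
  set a := (ζ ^ 2).re with hadef
  set t := W ^ η with htdef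
  have ht1 : 1 ≤ t := Real.one_le_rpow hW1 hη.le
  have hε : W ^ (-1 + η) = W⁻¹ * t := by
    rw [Real.rpow_add hW0, Real.rpow_neg_one]
  have hL : W ^ (-(1 - 2 * η)) = W⁻¹ * t ^ 2 := by
    rw [htdef, ← Real.rpow_natCast, ← Real.rpow_mul hW0.le, ← Real.rpow_neg_one,
      ← Real.rpow_add hW0]
    congr 1
    push_cast
    ring
  have hKL : C * (2 * t) ^ γ * (W⁻¹ * t ^ 2) = K * W ^ (-(1 - 2 * η - η * γ)) := by
    rw [Real.mul_rpow two_pos.le (by positivity), ← hL, htdef, ← Real.rpow_mul hW0.le, hKdef,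
      mul_assoc, mul_assoc, mul_assoc, ← Real.rpow_add hW0]
    congr 4
    ring
  have hWi : 0 < W⁻¹ := inv_pos.2 hW0
  have hinv : 1 / (2 * a) ≤ 1 / (2 * a₀) := by gcongr
  have hinv' : 1 / a ≤ 1 / a₀ := by gcongr
  obtain ⟨R, hR, hRle⟩ := hU.exists_integral_eq (A := t) (L := W⁻¹ * t ^ 2) (ε := W⁻¹ * t)
    hC hγ hW0 ht1 (by positivity) hUx (by rwa [← hε])
    (by
      have e : W⁻¹ * t / 2 + W⁻¹ * t / (2 * a) = W⁻¹ * (t * (1 / 2 + 1 / (2 * a))) := by ring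
      rw [e]
      gcongr
      nlinarith)
    (by
      have e : 2 * (W⁻¹ * t / (2 * a)) ^ 2 = 1 / 2 * (W⁻¹ * (t * (1 / a))) ^ 2 := by
        field_simp
      have h6 : W⁻¹ * (t * (1 / a)) ≤ W⁻¹ * t ^ 2 := by
        gcongr
        nlinarith
      have h7 : (W⁻¹ * (t * (1 / a))) ^ 2 ≤ (W⁻¹ * t ^ 2) ^ 2 := by gcongr
      rw [e]
      nlinarith [sq_nonneg (W⁻¹ * (t * (1 / a)))])
    (by
      rw [← hL]
      linarith)
    (by
      have e : C * (2 * t) ^ γ * (2 * (W⁻¹ * t ^ 2)) =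
          2 * (C * (2 * t) ^ γ * (W⁻¹ * t ^ 2)) := by ring
      rw [e, hKL]
      rw [lt_div_iff₀ (by positivity)] at h4
      linarith)
  refine ⟨R, hR, hRle.trans ?_⟩
  have e1 : W ^ 2 * (W⁻¹ * t) ^ 2 / (2 * a) = t ^ 2 / (2 * a) := by field_simp
  have e2 : a * W ^ 2 * (W⁻¹ * t ^ 2) ^ 2 = a * t ^ 4 := by field_simp
  rw [hKL, ← hadef, e1, e2]
  have h8 : W ^ (-(1 - 2 * η - η * γ)) ≤ W ^ (-1 + 5 * η * γ) := by
    apply Real.rpow_le_rpow_of_exponent_le hW1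
    nlinarith
  have h9 : W ^ (-1 : ℝ) ≤ W ^ (-1 + 5 * η * γ) := by
    apply Real.rpow_le_rpow_of_exponent_le hW1
    have : 0 < 5 * η * γ := by positivity
    linarith
  have h10 := mul_le_mul_of_nonneg_left h8 hK.le
  linarith

/-- in the regime `|x−y| ≤ W^{−1+η}`, `Re U(x), Re U(y) ≤ W^η`, the kernel
of `K*K` equals `(1 + O(W^{−1+5ηγ}))·√(π/(2W²Re ζ²))·
exp(−(conj U(x)+U(y))/2 − Re U((x+y)/2) − (W²/(2Re ζ²))(x−y)²)`. -/
theorem stmt_18 :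
    ∀ (C c γ : ℝ), 1 ≤ C → 0 < c → 1 < γ →
    ∃ η₀ : ℝ, 0 < η₀ ∧
    ∀ η : ℝ, 0 < η → η ≤ η₀ →
    ∃ C' : ℝ, 0 < C' ∧ ∃ W₀ : ℝ, 0 < W₀ ∧
    ∀ (ζ : ℂ) (U : ℝ → ℂ), UHyp C c γ ζ U →
    ∀ W : ℝ, W₀ ≤ W →
    ∀ x y : ℝ, |x - y| ≤ W ^ (-1 + η) → (U x).re ≤ W ^ η → (U y).re ≤ W ^ η →
    ∃ R : ℂ,
      (∫ r : ℝ, starRingEnd ℂ (kerK W ζ U r x) * kerK W ζ U r y) =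
        (1 + R) * ((Real.sqrt (π / (2 * W^2 * (ζ^2).re)) : ℂ) *
          Complex.exp (-(starRingEnd ℂ (U x) + U y) / 2
            - (((U ((x + y)/2)).re : ℝ) : ℂ)
            - (((W^2 / (2 * (ζ^2).re) : ℝ) : ℂ)) * ((x : ℂ) - (y : ℂ))^2)) ∧
      ‖R‖ ≤ C' * W ^ (-1 + 5*η*γ) := by
  intro C c γ hC hc hγ
  have hγ0 : 0 < γ := by linarith
  refine ⟨1 / (5 * γ), by positivity, fun η hη hη₀ => ?_⟩
  have hηγ : η * γ ≤ 1 / 5 := by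
    rw [le_div_iff₀ (by positivity)] at hη₀
    linarith
  have hηη : η ≤ η * γ := by nlinarith
  set K : ℝ := C * 2 ^ γ with hKdef
  have hK : 0 < K := by positivity
  set r := min c (1 / (2 * K))
  have hr : 0 < r := lt_min hc (by positivity)
  have hr1 : K * r < 1 := by
    have : K * r ≤ K * (1 / (2 * K)) := by
      gcongr
      exact min_le_right _ _
    have e : K * (1 / (2 * K)) = 1 / 2 := by field_simp
    linarith
  set a₀ := 2 / C * (r / K)
  have ha₀ : 0 < a₀ := by positivity
  have ht : Filter.Tendsto (fun W : ℝ => W ^ η) .atTop .atTop := tendsto_rpow_atTop hη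
  have hs1 : Filter.Tendsto (fun W : ℝ => W ^ (-(1 - 2 * η))) .atTop (nhds 0) :=
    tendsto_rpow_neg_atTop (by linarith)
  have hs2 : Filter.Tendsto (fun W : ℝ => W ^ (-(1 - 2 * η - η * γ))) .atTop (nhds 0) :=
    tendsto_rpow_neg_atTop (by linarith)
  obtain ⟨W₀, hW₀⟩ := Filter.eventually_atTop.1 <|
    (ht.eventually_ge_atTop (1 / 2 + 1 / (2 * a₀))).and <|
    (ht.eventually_ge_atTop (1 / a₀)).and <|
    (hs1.eventually_le_const (show 0 < c / 2 by positivity)).and <|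
    (hs2.eventually_lt_const (show 0 < 1 / (2 * K) by positivity)).and <|
    eventually_four_mul_exp_le_inv hη ha₀
  refine ⟨12 * K + 1, by positivity, max W₀ 1, by positivity,
    fun ζ U hU W hW x y hxy hUx _ => ?_⟩
  have hW1 : 1 ≤ W := (le_max_right _ _).trans hW
  obtain ⟨h1, h2, h3, h4, h5⟩ := hW₀ W ((le_max_left _ _).trans hW)
  have ha : a₀ ≤ (ζ ^ 2).re := hU.le_re_sq hC hγ hr (min_le_left _ _) hr1
  exact hU.exists_integral_eq_rpow hC hγ hη hηη ha₀ ha hW1 h1 h2 h3 h4 (h5 _ ha) hxy hUx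
end
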